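/- Suppose R := liminf_{i→∞} a_i is finite (so R ≥ 2). Then ρ(α) ≥ M(α,γ_*), and moreover: if R = 2 then M(α,γ_*) ≥ 1/(2(√13+10)); if R = 3 then M(α,γ_*) ≥ (1/4)·(1 − 2/(1+√3))·(1 − (1/4)(1 + θ_1²/(1−θ_1)))/(1 + (1/4)(θ_1 − 1/(1+√3))), where θ_1 = (√13−3)/2 (this value is 1/20.487…); if R ≥ 4 is even then M(α,γ_*) ≥ (1/4)(1 − 3/R + 4/R² − 7/R³); if R ≥ 5 is odd then M(α,γ_*) ≥ (1/4)(1 − 3/R + 3/R² − 6/R³). -/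

import Mathlib

open Filter Finset

attribute [local instance] Classical.propDecidable

/-- Distance from `x` to the nearest integer, `‖x‖`. -/
noncomputable def nint (x : ℝ) : ℝ := |x - round x|

/-- The two-sided inhomogeneous approximation constant
`M(α,γ) = liminf_{|n|→∞} |n|·‖nα-γ‖`. -/
noncomputable def Mval (α γ : ℝ) : ℝ :=
  Filter.liminf (fun n : ℤ => (|n| : ℝ) * nint (n * α - γ)) Filter.cofinite

/-- `ρ(α) = sup { M(α,γ) : γ ∉ ℤ + αℤ }`. -/
noncomputable def rho (α : ℝ) : ℝ :=
  sSup {m : ℝ | ∃ γ : ℝ, (¬∃ p q : ℤ, γ = (p : ℝ) + (q : ℝ) * α) ∧ m = Mval α γ}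

/-- The tails `α_i` of the nearest integer continued fraction expansion of `α`. -/
noncomputable def nicfT (α : ℝ) : ℕ → ℝ
  | 0 => α
  | i + 1 =>
    if Int.fract (nicfT α i)⁻¹ ≤ 1 / 2 then Int.fract (nicfT α i)⁻¹
    else 1 - Int.fract (nicfT α i)⁻¹

/-- The partial quotients `a_i` (meaningful for `i ≥ 1`) of the NICF expansion. -/
noncomputable def nicfA (α : ℝ) : ℕ → ℤ
  | 0 => 0
  | i + 1 => if Int.fract (nicfT α i)⁻¹ ≤ 1 / 2 then ⌊(nicfT α i)⁻¹⌋ else ⌈(nicfT α i)⁻¹⌉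

/-- The signs `ε_i` of the NICF expansion (`ε_1 = 1`). -/
noncomputable def nicfE (α : ℝ) : ℕ → ℤ
  | 0 => 1
  | 1 => 1
  | i + 2 => if Int.fract (nicfT α i)⁻¹ ≤ 1 / 2 then 1 else -1

/-- `nicfD α n = D_{n-1} = α_0 α_1 ⋯ α_{n-1}` (so `nicfD α 0 = 1`, `nicfD α 1 = α`). -/
noncomputable def nicfD (α : ℝ) (n : ℕ) : ℝ := ∏ j ∈ Finset.range n, nicfT α j

/-- The number of indices `1 ≤ k ≤ i` with `a_k` odd. -/
noncomputable def oddIdx (α : ℝ) (i : ℕ) : ℕ :=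
  ((Finset.Icc 1 i).filter fun k => Odd (nicfA α k)).card

/-- `λ_i`: zero if `a_i` is even, `(-1)^j` if `a_i = a_{n_j}` is the `j`-th odd partial
quotient. -/
noncomputable def lamStar (α : ℝ) (i : ℕ) : ℤ :=
  if Odd (nicfA α i) then (-1) ^ oddIdx α i else 0

/-- `γ_* = Σ_{i≥1} (a_i - 1 + ε_i + λ_i)/2 · D_{i-1}`. -/
noncomputable def gammaStar (α : ℝ) : ℝ :=
  ∑' k : ℕ,
    (((nicfA α (k + 1) : ℝ) - 1 + (nicfE α (k + 1) : ℝ) + (lamStar α (k + 1) : ℝ)) / 2) *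
      nicfD α (k + 1)

/-- `λ'_i`: zero if `a_i` is even, one if `a_i` is odd. -/
noncomputable def lamStar2 (α : ℝ) (i : ℕ) : ℤ := if Odd (nicfA α i) then 1 else 0

/-- `γ_** = Σ_{i≥1} (a_i + λ'_i)/2 · D_{i-1}`. -/
noncomputable def gammaStar2 (α : ℝ) : ℝ :=
  ∑' k : ℕ, (((nicfA α (k + 1) : ℝ) + (lamStar2 α (k + 1) : ℝ)) / 2) * nicfD α (k + 1)

/-- The denominators `q_i`: `q_0 = 1`, `q_1 = a_1`, `q_i = a_i q_{i-1} + ε_i q_{i-2}`. -/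
noncomputable def qseq (α : ℝ) : ℕ → ℤ
  | 0 => 1
  | 1 => nicfA α 1
  | i + 2 => nicfA α (i + 2) * qseq α (i + 1) + nicfE α (i + 2) * qseq α i

/-- `ᾱ_i = q_{i-1}/q_i` (with `ᾱ_0 = 0`). -/
noncomputable def abar (α : ℝ) (i : ℕ) : ℝ :=
  if i = 0 then 0 else (qseq α (i - 1) : ℝ) / (qseq α i : ℝ)

/-- `δ_i = -(-ε_1)(-ε_2)⋯(-ε_{i+1})`. -/
noncomputable def deltaSeq (α : ℝ) (i : ℕ) : ℤ := -∏ j ∈ Finset.Icc 1 (i + 1), (-nicfE α j)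

/-- `d_n^- = (Σ_{i=1}^n t_i δ_{i-1} q_{i-1}) / (δ_{n-1} q_n)` for `γ_*` (so `t_i = λ_i`). -/
noncomputable def dminus (α : ℝ) (n : ℕ) : ℝ :=
  (∑ i ∈ Finset.Icc 1 n, (lamStar α i : ℝ) * (deltaSeq α (i - 1) : ℝ) * (qseq α (i - 1) : ℝ)) /
    ((deltaSeq α (n - 1) : ℝ) * (qseq α n : ℝ))

/-- `d_n^+ = (Σ_{i=n+1}^∞ t_i D_{i-1}) / D_{n-1}` for `γ_*` (so `t_i = λ_i`). -/
noncomputable def dplus (α : ℝ) (n : ℕ) : ℝ :=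
  (∑' k : ℕ, (lamStar α (n + 1 + k) : ℝ) * nicfD α (n + 1 + k)) / nicfD α n

/-- `d_n^-` for `γ_**` (so `t_i = λ'_i`). -/
noncomputable def dminus2 (α : ℝ) (n : ℕ) : ℝ :=
  (∑ i ∈ Finset.Icc 1 n, (lamStar2 α i : ℝ) * (deltaSeq α (i - 1) : ℝ) * (qseq α (i - 1) : ℝ)) /
    ((deltaSeq α (n - 1) : ℝ) * (qseq α n : ℝ))

/-- `d_n^+` for `γ_**` (so `t_i = λ'_i`). -/
noncomputable def dplus2 (α : ℝ) (n : ℕ) : ℝ :=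
  (∑' k : ℕ, (lamStar2 α (n + 1 + k) : ℝ) * nicfD α (n + 1 + k)) / nicfD α n

/-- `i ∈ S(γ_*)`: `|d_i^-| ≤ 1 - ᾱ_i` and `-(1-ε_{i+1}α_i) ≤ d_i^+ ≤ 1+ε_{i+1}α_i`. -/
def inS (α : ℝ) (i : ℕ) : Prop :=
  |dminus α i| ≤ 1 - abar α i ∧
    -(1 - (nicfE α (i + 1) : ℝ) * nicfT α i) ≤ dplus α i ∧
      dplus α i ≤ 1 + (nicfE α (i + 1) : ℝ) * nicfT α i

/-- `i ∈ S(γ_**)`. -/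
def inS2 (α : ℝ) (i : ℕ) : Prop :=
  |dminus2 α i| ≤ 1 - abar α i ∧
    -(1 - (nicfE α (i + 1) : ℝ) * nicfT α i) ≤ dplus2 α i ∧
      dplus2 α i ≤ 1 + (nicfE α (i + 1) : ℝ) * nicfT α i

/-- The remainders `γ_i` of the alpha-expansion of `γ`: `γ_0 = γ`,
`γ_{i+1} = {γ_i/α_i}`. -/
noncomputable def gSeq (α γ : ℝ) : ℕ → ℝ
  | 0 => γ
  | i + 1 => Int.fract (gSeq α γ i / nicfT α i)

/-- The coefficients `c_i` (for `i ≥ 1`) of the alpha-expansion of `γ`: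
`c_{i+1} = ⌊γ_i/α_i⌋`. -/
noncomputable def cCoef (α γ : ℝ) (i : ℕ) : ℤ := ⌊gSeq α γ (i - 1) / nicfT α (i - 1)⌋

open Filter Finset
attribute [local instance] Classical.propDecidable

structure CF where
  a : ℕ → ℤ
  E : ℕ → ℤ
  s : ℕ → ℤ
  lam : ℕ → ℤ
  T : ℕ → ℝ
  dp : ℕ → ℝ
  T0 : ∀ k, 0 < T k
  T12 : ∀ k, T k < 1 / 2
  hT : ∀ k, T k * (a k + E (k + 1) * T (k + 1)) = 1
  E0 : E 0 = 1
  hE : ∀ k, E k = 1 ∨ E k = -1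
  ha : ∀ k, 2 ≤ a k
  haE : ∀ k, a k = 2 → E (k + 1) = 1
  hs : ∀ k, s k = 1 ∨ s k = -1
  hodd : ∀ k, Odd (a k) → s (k + 1) = - s k ∧ lam k = - s k
  heven : ∀ k, ¬ Odd (a k) → s (k + 1) = s k ∧ lam k = 0
  hdp : ∀ k, dp k = T k * (lam k + dp (k + 1))
  hdp1 : ∀ k, |dp k| ≤ 1

/-- past step -/
noncomputable def stx (a E : ℤ) (x : ℝ) : ℝ := 1 / (a + E * x)
noncomputable def std (a E : ℤ) (x D : ℝ) : ℝ :=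
  if Odd a then stx a E x * (-1 + E * D) else - (stx a E x * (E * D))
/-- future step -/
noncomputable def ste (a : ℤ) (y e : ℝ) : ℝ := if Odd a then y * (1 - e) else y * e

namespace CF
variable (C : CF)

noncomputable def xs : ℕ → ℝ
  | 0 => 0
  | k + 1 => stx (C.a k) (C.E k) (xs k)

noncomputable def Dn : ℕ → ℝ
  | 0 => 0
  | k + 1 => std (C.a k) (C.E k) (C.xs k) (Dn k)

noncomputable def e (k : ℕ) : ℝ := - (C.s k : ℝ) * C.dp k

noncomputable def ds (k : ℕ) : ℝ := - (C.s k : ℝ) * C.Dn k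

lemma s_sq (k : ℕ) : (C.s k : ℝ) * C.s k = 1 := by
  rcases C.hs k with h | h <;> simp [h]

lemma E_sq (k : ℕ) : (C.E k : ℝ) * C.E k = 1 := by
  rcases C.hE k with h | h <;> simp [h]

lemma abs_s (k : ℕ) : |(C.s k : ℝ)| = 1 := by
  rcases C.hs k with h | h <;> simp [h]

lemma abs_E (k : ℕ) : |(C.E k : ℝ)| = 1 := by
  rcases C.hE k with h | h <;> simp [h]

lemma dp_eq (k : ℕ) : C.dp k = - (C.s k : ℝ) * C.e k := by
  have := C.s_sq k
  unfold e
  linear_combination (-C.dp k) * this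

lemma e_step (k : ℕ) : C.e k = ste (C.a k) (C.T k) (C.e (k + 1)) := by
  unfold ste
  have h1 := C.hdp k
  have h2 := C.s_sq k
  split_ifs with h
  · obtain ⟨h3, h4⟩ := C.hodd k h
    unfold e
    rw [h1, h3, h4]; push_cast
    linear_combination (C.T k) * h2
  · obtain ⟨h3, h4⟩ := C.heven k h
    unfold e
    rw [h1, h3, h4]; push_cast
    ring

lemma e_le1 (k : ℕ) : |C.e k| ≤ 1 := by
  unfold e
  rw [abs_mul, abs_neg, C.abs_s, one_mul]; exact C.hdp1 k

lemma ds_zero : C.ds 0 = 0 := by simp [ds, Dn]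

lemma ds_succ (k : ℕ) : C.ds (k + 1) = C.xs (k + 1) * (C.lam k - C.E k * C.ds k) := by
  have h2 := C.s_sq k
  unfold ds
  simp only [Dn, xs, std]
  split_ifs with h
  · obtain ⟨h3, h4⟩ := C.hodd k h
    rw [h3, h4]; push_cast
    ring
  · obtain ⟨h3, h4⟩ := C.heven k h
    rw [h3, h4]; push_cast
    ring

/-- grid sequence -/
def V (N M : ℤ) : ℕ → ℤ
  | 0 => N
  | 1 => -M
  | k + 2 => C.a k * V N M (k + 1) + C.E k * V N M k - C.lam k

noncomputable def X (N M : ℤ) (k : ℕ) : ℝ := C.V N M k - C.V N M (k + 1) * C.xs k - C.ds k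
noncomputable def Y (N M : ℤ) (k : ℕ) : ℝ := C.V N M (k + 1) + C.E k * C.T k * C.V N M k - C.dp k

lemma Y_succ (N M : ℤ) (k : ℕ) : C.T k * C.Y N M (k + 1) = C.Y N M k := by
  unfold Y
  simp only [V]
  push_cast
  linear_combination (C.V N M (k + 1) : ℝ) * C.hT k + C.hdp k

lemma lam_parity (k : ℕ) : (C.a k - C.lam k) % 2 = 0 := by
  by_cases h : Odd (C.a k)
  · obtain ⟨h3, h4⟩ := C.hodd k h
    obtain ⟨t, ht⟩ := h
    rcases C.hs k with h5 | h5 <;> omega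
  · obtain ⟨h3, h4⟩ := C.heven k h
    rw [Int.not_odd_iff_even] at h
    obtain ⟨t, ht⟩ := h
    omega

lemma V_odd (N M : ℤ) (hN : Odd N) (hM : Odd M) (k : ℕ) : Odd (C.V N M k) := by
  induction k using Nat.twoStepInduction with
  | zero => simpa [V]
  | one => simpa [V] using hM.neg
  | more k h1 h2 =>
    simp only [V]
    obtain ⟨p, hp⟩ := h1
    obtain ⟨q, hq⟩ := h2
    have := C.lam_parity k
    rw [hp, hq]
    obtain ⟨r, hr⟩ : ∃ r, C.a k - C.lam k = 2 * r := ⟨(C.a k - C.lam k) / 2, by omega⟩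
    rcases C.hE k with h | h <;> rw [h]
    · exact ⟨C.a k * q + r + p, by linarith⟩
    · exact ⟨C.a k * q + r - p - 1, by linarith⟩

lemma lam_cases (k : ℕ) : |(C.lam k : ℝ)| ≤ 1 := by
  by_cases h : Odd (C.a k)
  · obtain ⟨h3, h4⟩ := C.hodd k h
    rw [h4]; push_cast; rw [abs_neg, C.abs_s]
  · obtain ⟨h3, h4⟩ := C.heven k h
    rw [h4]; simp

end CF

namespace CF
variable (C : CF)

def PB : Prop := ∀ k, (0 ≤ C.xs k ∧ C.xs k ≤ 5 / 8) ∧ |C.Dn k| ≤ 1 / 2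

variable {C}

lemma ET_lt (k : ℕ) : |(C.E k : ℝ) * C.T k| < 1 / 2 := by
  rw [abs_mul, C.abs_E, one_mul, abs_of_pos (C.T0 k)]; exact C.T12 k

lemma den_pos (h : C.PB) (k : ℕ) : 1 ≤ (C.a k : ℝ) + C.E k * C.xs k := by
  have h2 : (2 : ℝ) ≤ C.a k := by exact_mod_cast C.ha k
  obtain ⟨⟨h3, h4⟩, -⟩ := h k
  rcases C.hE k with h | h <;> rw [h] <;> push_cast <;> linarith

lemma xs_mul (h : C.PB) (k : ℕ) : C.xs (k + 1) * ((C.a k : ℝ) + C.E k * C.xs k) = 1 := by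
  have := den_pos h k
  simp only [xs, stx]
  field_simp

lemma xs_pos (h : C.PB) (k : ℕ) : 0 < C.xs (k + 1) := by
  have := den_pos h k
  simp only [xs, stx]
  positivity

lemma X_succ (h : C.PB) (N M : ℤ) (k : ℕ) :
    C.X N M (k + 1) = C.xs (k + 1) * (- C.E k * C.X N M k) := by
  unfold X
  rw [C.ds_succ]
  simp only [V]
  push_cast
  linear_combination (- (C.V N M (k + 1) : ℝ)) * xs_mul h k

lemma cell_pos (h : C.PB) (k : ℕ) : 1 / 2 ≤ 1 + (C.E k : ℝ) * C.T k * C.xs k := by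
  obtain ⟨⟨h3, h4⟩, -⟩ := h k
  have := C.T0 k
  have := C.T12 k
  rcases C.hE k with h | h <;> rw [h] <;> push_cast <;> nlinarith

lemma invariant (h : C.PB) (N M : ℤ) (k : ℕ) :
    |C.X N M k * C.Y N M k| = |N * C.Y N M 0| * (1 + (C.E k : ℝ) * C.T k * C.xs k) := by
  induction k with
  | zero => simp [X, V, xs, ds_zero]
  | succ k ih =>
    have hT := C.T0 k
    have hx := xs_pos h k
    have e1 : C.X N M (k + 1) * C.Y N M (k + 1) =
        (C.xs (k + 1) / C.T k) * (-C.E k * (C.X N M k * C.Y N M k)) := by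
      rw [X_succ h, ← C.Y_succ N M k]
      field_simp
    rw [e1, abs_mul, abs_mul, abs_neg, C.abs_E, one_mul, ih, abs_of_pos (by positivity)]
    have e2 : (C.xs (k + 1) / C.T k) * (1 + (C.E k : ℝ) * C.T k * C.xs k) =
        1 + (C.E (k + 1) : ℝ) * C.T (k + 1) * C.xs (k + 1) := by
      field_simp
      linear_combination (-C.xs (k+1)) * C.hT k + C.T k * xs_mul h k
    rw [← e2]; ring

lemma X_prop (h : C.PB) (j : ℕ) : ∃ c > 0, ∀ N M : ℤ, |C.X N M j| = c * |(N : ℝ)| := by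
  induction j with
  | zero => exact ⟨1, one_pos, fun N M => by simp [X, V, xs, ds_zero]⟩
  | succ j ih =>
    obtain ⟨c, hc, hh⟩ := ih
    have := xs_pos h j
    refine ⟨C.xs (j + 1) * c, by positivity, fun N M => ?_⟩
    rw [X_succ h, abs_mul, abs_mul, abs_neg, C.abs_E, one_mul, hh, abs_of_pos this]; ring

lemma Y_prop (j : ℕ) : ∃ c > 0, ∀ N M : ℤ, |C.Y N M j| = c * |C.Y N M 0| := by
  induction j with
  | zero => exact ⟨1, one_pos, fun N M => by simp⟩
  | succ j ih =>
    obtain ⟨c, hc, hh⟩ := ih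
    have := C.T0 j
    refine ⟨c / C.T j, by positivity, fun N M => ?_⟩
    have h1 := C.Y_succ N M j
    have h2 := hh N M
    rw [← h1, abs_mul, abs_of_pos this] at h2
    field_simp
    linarith

lemma V_bound (h : C.PB) (j : ℕ) : ∃ B : ℝ, ∀ N M : ℤ, |C.Y N M 0| ≤ 1 →
    |C.V N M j| ≤ |C.V N M (j + 1)| → |(N : ℝ)| ≤ B := by
  obtain ⟨c, hc, hX⟩ := X_prop h j
  obtain ⟨d, hd, hY⟩ := Y_prop (C := C) j
  refine ⟨(4 * (1 + d) + 1) / c, fun N M hY0 hV => ?_⟩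
  have hV' : |(C.V N M j : ℝ)| ≤ |(C.V N M (j + 1) : ℝ)| := by exact_mod_cast hV
  have h1 : |C.Y N M j| ≤ d := by rw [hY]; nlinarith
  have h2 : |(C.V N M (j + 1) : ℝ)| ≤ |C.Y N M j| + |(C.E j : ℝ) * C.T j * C.V N M j| + |C.dp j| := by
    have : (C.V N M (j + 1) : ℝ) = C.Y N M j - (C.E j : ℝ) * C.T j * C.V N M j + C.dp j := by
      unfold Y; ring
    rw [this]
    refine (abs_add_le _ _).trans ?_
    gcongr
    exact abs_sub _ _
  have h3 : |(C.E j : ℝ) * C.T j * C.V N M j| ≤ 1 / 2 * |(C.V N M j : ℝ)| := by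
    rw [abs_mul]
    gcongr
    exact (ET_lt j).le
  have h4 := C.hdp1 j
  have h5 : |C.X N M j| ≤ |(C.V N M j : ℝ)| + |(C.V N M (j + 1) : ℝ)| + 1 := by
    unfold X
    have h6 : |C.ds j| ≤ 1 := by
      unfold ds; rw [abs_mul, abs_neg, C.abs_s, one_mul]; linarith [(h j).2]
    have h7 : |(C.V N M (j + 1) : ℝ) * C.xs j| ≤ |(C.V N M (j + 1) : ℝ)| := by
      rw [abs_mul, abs_of_nonneg (h j).1.1]
      have := (h j).1.2
      have := abs_nonneg (C.V N M (j + 1) : ℝ)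
      nlinarith
    refine (abs_sub _ _).trans ?_
    have := abs_sub (C.V N M j : ℝ) (C.V N M (j + 1) * C.xs j)
    linarith
  rw [hX] at h5
  rw [le_div_iff₀ hc]
  linarith

lemma V_boundJ (h : C.PB) (J : ℕ) : ∃ B : ℝ, ∀ N M : ℤ, |C.Y N M 0| ≤ 1 → B < |(N : ℝ)| →
    ∀ j < J, |C.V N M (j + 1)| < |C.V N M j| := by
  choose B hB using V_bound h
  refine ⟨∑ j ∈ Finset.range J, |B j|, fun N M h1 h2 j hj => ?_⟩
  by_contra! hc
  have h3 := hB j N M h1 hc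
  have h4 : |B j| ≤ ∑ j ∈ Finset.range J, |B j| :=
    Finset.single_le_sum (f := fun j => |B j|) (fun i _ => abs_nonneg _) (Finset.mem_range.2 hj)
  linarith [le_abs_self (B j)]

lemma no_desc (f : ℕ → ℤ) : ∃ j, |f j| ≤ |f (j + 1)| := by
  by_contra! hc
  have : ∀ n : ℕ, |f n| + n ≤ |f 0| := by
    intro n
    induction n with
    | zero => simp
    | succ n ih => have := hc n; push_cast; omega
  have h1 := this (|f 0|.toNat + 1)
  have := abs_nonneg (f (|f 0|.toNat + 1))
  have := abs_nonneg (f 0)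
  push_cast at h1
  omega

lemma exists_min (h : C.PB) (J : ℕ) : ∃ B : ℝ, ∀ N M : ℤ, |C.Y N M 0| ≤ 1 → B < |(N : ℝ)| →
    ∃ k ≥ J, |C.V N M (k + 1)| ≤ |C.V N M k| ∧ |C.V N M (k + 1)| ≤ |C.V N M (k + 2)| := by
  obtain ⟨B, hB⟩ := V_boundJ h (J + 1)
  refine ⟨B, fun N M h1 h2 => ?_⟩
  have h3 := hB N M h1 h2
  have hex := no_desc (C.V N M)
  have hs := Nat.find_spec hex
  have hm := fun m => Nat.find_min hex (m := m)
  generalize Nat.find hex = j at hs hm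
  have hj : J + 1 ≤ j := by
    by_contra! hc
    exact absurd (h3 j hc) (not_lt.2 hs)
  obtain ⟨k, rfl⟩ : ∃ k, j = k + 1 := ⟨j - 1, by omega⟩
  refine ⟨k, by omega, ?_, hs⟩
  exact (not_le.1 (hm k (by omega))).le

end CF


def Sg (E : ℤ) : Prop := E = 1 ∨ E = -1

lemma contract {a E : ℤ} (hE : Sg E) (ha : 2 ≤ a) {x x' D D' : ℝ}
    (hx0 : 0 ≤ x) (hx1 : x ≤ 5 / 8) (hx0' : 0 ≤ x') (hx1' : x' ≤ 5 / 8) (hD : |D| ≤ 1 / 2)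
    (hp : stx a E x ≤ 5 / 8) (hp' : stx a E x' ≤ 5 / 8) :
    |stx a E x - stx a E x'| + |std a E x D - std a E x' D'| ≤
      98 / 100 * (|x - x'| + |D - D'|) := by
  have ha' : (2 : ℝ) ≤ a := by exact_mod_cast ha
  have hEa : |(E : ℝ)| = 1 := by rcases hE with h | h <;> simp [h]
  have hd : 1 ≤ (a : ℝ) + E * x := by rcases hE with h | h <;> rw [h] <;> push_cast <;> linarith
  have hd' : 1 ≤ (a : ℝ) + E * x' := by rcases hE with h | h <;> rw [h] <;> push_cast <;> linarith
  have hp0 : 0 ≤ stx a E x := by unfold stx; positivity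
  have hp0' : 0 ≤ stx a E x' := by unfold stx; positivity
  have e1 : stx a E x - stx a E x' = stx a E x * stx a E x' * (E * (x' - x)) := by
    unfold stx
    field_simp
    ring
  have h1 : |stx a E x - stx a E x'| ≤ 25 / 64 * |x - x'| := by
    rw [e1, abs_mul, abs_mul _ (x' - x), hEa, one_mul, abs_of_nonneg (by positivity), abs_sub_comm]
    gcongr
    nlinarith
  have hED : |(E : ℝ) * D| ≤ 1 / 2 := by rw [abs_mul, hEa, one_mul]; exact hD
  have hEDD : |(E : ℝ) * (D - D')| = |D - D'| := by rw [abs_mul, hEa, one_mul]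
  have h2 : |std a E x D - std a E x' D'| ≤
      |stx a E x - stx a E x'| * (3 / 2) + 5 / 8 * |D - D'| := by
    unfold std
    split_ifs with h
    · have : stx a E x * (-1 + E * D) - stx a E x' * (-1 + E * D') =
        (stx a E x - stx a E x') * (-1 + E * D) + stx a E x' * (E * (D - D')) := by ring
      rw [this]
      refine (abs_add_le _ _).trans ?_
      rw [abs_mul, abs_mul (stx a E x'), hEDD, abs_of_nonneg hp0']
      gcongr
      refine (abs_add_le _ _).trans ?_
      rw [abs_neg, abs_one]; linarith
    · have : -(stx a E x * (E * D)) - -(stx a E x' * (E * D')) =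
        (stx a E x - stx a E x') * (-(E * D)) + -(stx a E x' * (E * (D - D'))) := by ring
      rw [this]
      refine (abs_add_le _ _).trans ?_
      rw [abs_neg, abs_mul, abs_mul (stx a E x'), hEDD, abs_of_nonneg hp0', abs_neg]
      gcongr
      linarith
  have := abs_nonneg (x - x')
  have := abs_nonneg (D - D')
  linarith

lemma mul_perturb {A B A' τ : ℝ} (hA : |A - A'| ≤ τ) (hB : |B| ≤ 5 / 2) :
    A' * B - 5 / 2 * τ ≤ |A * B| := by
  have h1 : A * B = A' * B + (A - A') * B := by ring
  have h2 : |(A - A') * B| ≤ τ * (5 / 2) := by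
    rw [abs_mul]
    have := abs_nonneg (A - A')
    gcongr
    linarith
  have := neg_abs_le ((A - A') * B)
  have := le_abs_self (A * B)
  linarith

/-- Vertex inequalities -/
def Vert (c x D y e : ℝ) (E : ℤ) : Prop :=
  c * (1 + E * x * y) ≤ (1 - x + D) * (1 + E * y + e) ∧
  c * (1 + E * x * y) ≤ (1 - x - D) * (1 + E * y - e) ∧
  c * (1 + E * x * y) ≤ (1 + x + D) * (1 - E * y - e) ∧
  c * (1 + E * x * y) ≤ (1 + x - D) * (1 - E * y + e)

/-- Non-vertex inequality -/
def NVok (c : ℝ) (R : ℤ) (Q : ℝ → ℝ → ℤ → Prop) (F : ℝ → ℝ → Prop) : Prop :=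
  ∀ (x D x' D' : ℝ) (E E' : ℤ) (y e : ℝ) (a A b B lam : ℤ) (δ δ' : ℝ),
    Q x' D' E → |x - x'| ≤ 1 / 100 → |D - D'| ≤ 1 / 100 → F y e → 0 < y → y < 1 / 2 →
    Sg E → Sg E' → R ≤ a → (a = 2 → E' = 1) → |(lam : ℝ)| ≤ 1 → a * b = A + B + lam →
    3 ≤ |A| → 3 ≤ |B| → 1 ≤ |b| → Odd b → |b| ≤ |A| → |b| ≤ |B| →
    |δ| ≤ |D| → |δ'| ≤ |e| →
    c * (a + E' * y + E * x) ≤ |A + E * x * b + δ| * |B + E' * y * b + δ'|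

namespace CF
variable {C : CF}

noncomputable def rx (C : CF) (K : ℕ) : ℕ → ℝ
  | 0 => 0
  | i + 1 => stx (C.a (K + i)) (C.E (K + i)) (rx C K i)

noncomputable def rd (C : CF) (K : ℕ) : ℕ → ℝ
  | 0 => 0
  | i + 1 => std (C.a (K + i)) (C.E (K + i)) (C.rx K i) (rd C K i)

lemma Q_all (K : ℕ) (R : ℤ) (hR : ∀ k ≥ K, R ≤ C.a k) (Q : ℝ → ℝ → ℤ → Prop)
    (Q0 : ∀ E, Sg E → Q 0 0 E)
    (Qs : ∀ x D E a E', Q x D E → Sg E → Sg E' → R ≤ a → (a = 2 → E' = 1) →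
      Q (stx a E x) (std a E x D) E') (i : ℕ) : Q (C.rx K i) (C.rd K i) (C.E (K + i)) := by
  induction i with
  | zero => exact Q0 _ (C.hE _)
  | succ i ih =>
    exact Qs _ _ _ _ _ ih (C.hE _) (C.hE _) (hR _ (by omega)) (C.haE _)

lemma rx_conv (hPB : C.PB) (K : ℕ) (hr : ∀ i, (0 ≤ C.rx K i ∧ C.rx K i ≤ 5 / 8)) (i : ℕ) :
    |C.xs (K + i) - C.rx K i| + |C.Dn (K + i) - C.rd K i| ≤
      (98 / 100) ^ i * (|C.xs K| + |C.Dn K|) := by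
  induction i with
  | zero => simp [rx, rd]
  | succ i ih =>
    have h := contract (a := C.a (K + i)) (E := C.E (K + i)) (D := C.Dn (K + i)) (D' := C.rd K i)
      (C.hE _) (C.ha _) (hPB (K + i)).1.1
      (hPB (K + i)).1.2 (hr i).1 (hr i).2 (hPB (K + i)).2 (hPB (K + i + 1)).1.2 (hr (i + 1)).2
    refine (show _ ≤ _ from h).trans ?_
    rw [pow_succ]
    linarith

lemma vertex_case (hPB : C.PB) {c τ x D : ℝ} {k : ℕ} (hc0 : 0 ≤ c) (hc1 : c ≤ 1)
    (hτ : |C.xs k - x| + |C.Dn k - D| ≤ τ)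
    (hv : Vert c x D (C.T k) (C.e k) (C.E k)) (N M : ℤ)
    (h1 : |C.V N M k| = 1) (h2 : |C.V N M (k + 1)| = 1) :
    c * (1 + (C.E k : ℝ) * C.T k * C.xs k) - 4 * τ ≤ |C.X N M k * C.Y N M k| := by
  obtain ⟨v0, v1, v2, v3⟩ := hv
  have hT0 := C.T0 k
  have hT1 := C.T12 k
  have he := abs_le.1 (C.e_le1 k)
  have hss := C.s_sq k
  have hxx := abs_nonneg (C.xs k - x)
  have hDD := abs_nonneg (C.Dn k - D)
  have hEy : -(1/2) ≤ (C.E k : ℝ) * C.T k ∧ (C.E k : ℝ) * C.T k ≤ 1 / 2 := by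
    have := abs_le.1 (ET_lt (C := C) k).le
    exact ⟨by linarith [this.1], this.2⟩
  have key : c * (1 + (C.E k : ℝ) * C.T k * C.xs k) - τ ≤ c * (1 + C.E k * x * C.T k) := by
    have e1 : c * (1 + (C.E k : ℝ) * C.T k * C.xs k) = c * (1 + C.E k * x * C.T k)
        + c * (C.E k * C.T k) * (C.xs k - x) := by ring
    have e2 : c * (C.E k * C.T k) * (C.xs k - x) ≤ |C.xs k - x| := by
      refine (le_abs_self _).trans ?_
      rw [abs_mul, abs_mul, abs_of_nonneg hc0]
      have h3 := (ET_lt (C := C) k).le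
      have h4 := abs_nonneg ((C.E k : ℝ) * C.T k)
      have : c * |(C.E k : ℝ) * C.T k| ≤ 1 := by nlinarith
      nlinarith
    linarith
  -- absolute value computations
  have hXY : ∀ p q : ℝ, (C.V N M k : ℝ) = C.s k * p → (C.V N M (k + 1) : ℝ) = C.s k * q →
      |C.X N M k * C.Y N M k| =
        |(p - q * C.xs k + C.Dn k) * (q + C.E k * C.T k * p + C.e k)| := by
    intro p q hp hq
    have : C.X N M k * C.Y N M k =
        (p - q * C.xs k + C.Dn k) * (q + C.E k * C.T k * p + C.e k) := by
      unfold X Y ds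
      rw [C.dp_eq, hp, hq]
      linear_combination ((p - q * C.xs k + C.Dn k) * (q + C.E k * C.T k * p + C.e k)) * hss
    rw [this]
  have hb : ∀ u w : ℝ, (u = 1 ∨ u = -1) → (w = 1 ∨ w = -1) →
      |1 + u * (C.E k * C.T k) + w * C.e k| ≤ 5 / 2 := by
    rintro u w (rfl | rfl) (rfl | rfl) <;> rw [abs_le] <;> constructor <;> linarith [he.1, he.2]
  have hA : ∀ u w : ℝ, (u = 1 ∨ u = -1) → (w = 1 ∨ w = -1) →
      |(1 + u * C.xs k + w * C.Dn k) - (1 + u * x + w * D)| ≤ τ := by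
    intro u w hu hw
    have : (1 + u * C.xs k + w * C.Dn k) - (1 + u * x + w * D)
      = u * (C.xs k - x) + w * (C.Dn k - D) := by ring
    rw [this]
    refine (abs_add_le _ _).trans ?_
    have hu' : |u| = 1 := by rcases hu with h | h <;> simp [h]
    have hw' : |w| = 1 := by rcases hw with h | h <;> simp [h]
    rw [abs_mul, abs_mul, hu', hw', one_mul, one_mul]
    exact hτ
  have h1' : (C.V N M k : ℝ) = 1 ∨ (C.V N M k : ℝ) = -1 := by
    rcases (abs_eq (by norm_num)).1 h1 with h | h <;> rw [h] <;> simp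
  have h2' : (C.V N M (k + 1) : ℝ) = 1 ∨ (C.V N M (k + 1) : ℝ) = -1 := by
    rcases (abs_eq (by norm_num)).1 h2 with h | h <;> rw [h] <;> simp
  have hs' : (C.s k : ℝ) = 1 ∨ (C.s k : ℝ) = -1 := by
    rcases C.hs k with h | h <;> rw [h] <;> simp
  have hp : ((C.V N M k : ℝ) = C.s k * 1 ∨ (C.V N M k : ℝ) = C.s k * (-1)) := by
    rcases hs' with h | h <;> rcases h1' with h' | h' <;> rw [h, h'] <;> norm_num
  have hq : ((C.V N M (k + 1) : ℝ) = C.s k * 1 ∨ (C.V N M (k + 1) : ℝ) = C.s k * (-1)) := by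
    rcases hs' with h | h <;> rcases h2' with h' | h' <;> rw [h, h'] <;> norm_num
  have ht0 : 0 ≤ τ := by linarith
  rcases hp with hp | hp <;> rcases hq with hq | hq <;> rw [hXY _ _ hp hq]
  · have := mul_perturb (hA (-1) 1 (by simp) (by simp)) (hb 1 1 (by simp) (by simp))
    have e1 : (1 - 1 * C.xs k + C.Dn k) * (1 + C.E k * C.T k * 1 + C.e k) =
      (1 + -1 * C.xs k + 1 * C.Dn k) * (1 + 1 * (C.E k * C.T k) + 1 * C.e k) := by ring
    rw [e1]; linarith
  · have := mul_perturb (hA 1 1 (by simp) (by simp)) (hb (-1) (-1) (by simp) (by simp))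
    have e1 : (1 - -1 * C.xs k + C.Dn k) * (-1 + C.E k * C.T k * 1 + C.e k) =
      -((1 + 1 * C.xs k + 1 * C.Dn k) * (1 + -1 * (C.E k * C.T k) + -1 * C.e k)) := by ring
    rw [e1, abs_neg]; linarith
  · have := mul_perturb (hA 1 (-1) (by simp) (by simp)) (hb (-1) 1 (by simp) (by simp))
    have e1 : (-1 - 1 * C.xs k + C.Dn k) * (1 + C.E k * C.T k * -1 + C.e k) =
      -((1 + 1 * C.xs k + -1 * C.Dn k) * (1 + -1 * (C.E k * C.T k) + 1 * C.e k)) := by ring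
    rw [e1, abs_neg]; linarith
  · have := mul_perturb (hA (-1) (-1) (by simp) (by simp)) (hb 1 (-1) (by simp) (by simp))
    have e1 : (-1 - -1 * C.xs k + C.Dn k) * (-1 + C.E k * C.T k * -1 + C.e k) =
      (1 + -1 * C.xs k + -1 * C.Dn k) * (1 + 1 * (C.E k * C.T k) + -1 * C.e k) := by ring
    rw [e1]; linarith

theorem assembly (hPB : C.PB) (K : ℕ) (R : ℤ) (hR : ∀ k ≥ K, R ≤ C.a k)
    (Q : ℝ → ℝ → ℤ → Prop) (F : ℝ → ℝ → Prop) (c : ℝ) (hc0 : 0 ≤ c) (hc1 : c ≤ 1)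
    (Q0 : ∀ E, Sg E → Q 0 0 E)
    (Qs : ∀ x D E a E', Q x D E → Sg E → Sg E' → R ≤ a → (a = 2 → E' = 1) →
      Q (stx a E x) (std a E x D) E')
    (Qb : ∀ x D E, Q x D E → (0 ≤ x ∧ x ≤ 5 / 8))
    (hF : ∀ k ≥ K, F (C.T k) (C.e k))
    (vert : ∀ x D E y e, Sg E → Q x D E → 0 < y → y < 1 / 2 → F y e → Vert c x D y e E)
    (nv : NVok c R Q F) :
    ∀ η > 0, ∃ B : ℝ, ∀ N M : ℤ, Odd N → Odd M → |C.Y N M 0| ≤ 1 → B < |(N : ℝ)| →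
      c - η ≤ |N * C.Y N M 0| := by
  intro η hη
  have hQ := Q_all K R hR Q Q0 Qs
  have hconv := rx_conv hPB K (fun i => Qb _ _ _ (hQ i))
  obtain ⟨τ, hτ0, hτ1, hτ2⟩ : ∃ τ : ℝ, 0 < τ ∧ τ ≤ 1 / 100 ∧ 8 * τ ≤ η :=
    ⟨min (1 / 100) (η / 8), by positivity, min_le_left _ _, by
      have := min_le_right (1 / 100) (η / 8); linarith⟩
  obtain ⟨i0, hi0⟩ : ∃ i0, ∀ i ≥ i0,
      |C.xs (K + i) - C.rx K i| + |C.Dn (K + i) - C.rd K i| ≤ τ := by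
    have ht : Tendsto (fun i : ℕ => (98 / 100 : ℝ) ^ i * (|C.xs K| + |C.Dn K|)) atTop (nhds 0) := by
      have := (tendsto_pow_atTop_nhds_zero_of_lt_one (r := (98 / 100 : ℝ)) (by norm_num)
        (by norm_num)).mul_const (|C.xs K| + |C.Dn K|)
      simpa using this
    obtain ⟨i0, hi⟩ := (ht.eventually (ge_mem_nhds hτ0)).exists_forall_of_atTop
    exact ⟨i0, fun i h => (hconv i).trans (hi i h)⟩
  obtain ⟨B, hB⟩ := exists_min hPB (K + i0)
  refine ⟨B, fun N M hN hM hY hBN => ?_⟩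
  obtain ⟨k, hk, hA, hBb⟩ := hB N M hY hBN
  -- reduction to a cell
  suffices h : ∃ k, c * (1 + (C.E k : ℝ) * C.T k * C.xs k) - 4 * τ ≤ |C.X N M k * C.Y N M k| by
    obtain ⟨k, h⟩ := h
    rw [invariant hPB] at h
    have h2 := cell_pos hPB k
    by_contra! hc
    nlinarith
  have hvc : ∀ k ≥ K + i0, |C.V N M k| = 1 → |C.V N M (k + 1)| = 1 →
      c * (1 + (C.E k : ℝ) * C.T k * C.xs k) - 4 * τ ≤ |C.X N M k * C.Y N M k| := by
    intro k hk h1 h2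
    obtain ⟨i, rfl⟩ := Nat.exists_eq_add_of_le (show K ≤ k by omega)
    exact vertex_case hPB hc0 hc1 (hi0 i (by omega)) (vert _ _ _ _ _ (C.hE _) (hQ i) (C.T0 _)
      (C.T12 _) (hF _ (by omega))) N M h1 h2
  have o0 := C.V_odd N M hN hM k
  have o1 := C.V_odd N M hN hM (k + 1)
  have o2 := C.V_odd N M hN hM (k + 2)
  have hodd1 : ∀ z : ℤ, Odd z → 1 ≤ |z| ∧ (|z| ≠ 1 → 3 ≤ |z|) := by
    rintro z ⟨t, rfl⟩
    rcases abs_cases (2 * t + 1) with ⟨h, _⟩ | ⟨h, _⟩ <;> rw [h] <;> omega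
  have p0 := hodd1 _ o0
  have p1 := hodd1 _ o1
  have p2 := hodd1 _ o2
  by_cases hA1 : |C.V N M k| = 1
  · exact ⟨k, hvc k hk hA1 (by omega)⟩
  by_cases hB1 : |C.V N M (k + 2)| = 1
  · exact ⟨k + 1, hvc (k + 1) (by omega) (by omega) hB1⟩
  refine ⟨k, ?_⟩
  obtain ⟨i, rfl⟩ := Nat.exists_eq_add_of_le (show K ≤ k by omega)
  set k := K + i
  have hconvk := hi0 i (by omega)
  have hEE := C.E_sq k
  have hT0 := C.T0 k
  have hl := C.lam_cases k
  have hxx := abs_nonneg (C.xs k - C.rx K i)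
  have hDD := abs_nonneg (C.Dn k - C.rd K i)
  have habsA : |-C.E k * C.V N M k| = |C.V N M k| := by
    rw [abs_mul, abs_neg]
    rcases C.hE k with h | h <;> simp [h]
  have key := nv (C.xs k) (C.Dn k) (C.rx K i) (C.rd K i) (C.E k) (C.E (k + 1)) (C.T (k + 1))
    (C.e (k + 1)) (C.a k) (- C.E k * C.V N M k) (C.V N M (k + 1)) (C.V N M (k + 2)) (C.lam k)
    (C.E k * C.ds k) (- C.dp (k + 1)) (hQ i) (by linarith) (by linarith)
    (hF _ (by omega)) (C.T0 _) (C.T12 _) (C.hE _) (C.hE _) (hR _ (by omega)) (C.haE _) hl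
    (by simp only [V]; ring) (by rw [habsA]; exact p0.2 hA1) (p2.2 hB1) p1.1 o1
    (by rw [habsA]; exact hA) hBb
    (by unfold ds; rw [abs_mul, abs_mul, abs_neg, C.abs_E, C.abs_s]; simp)
    (by rw [C.dp_eq]; rw [abs_neg, abs_mul, abs_neg, C.abs_s, one_mul])
  have e1 : ((-C.E k * C.V N M k : ℤ) : ℝ) + C.E k * C.xs k * C.V N M (k + 1) + C.E k * C.ds k
      = - (C.E k * C.X N M k) := by
    unfold X; push_cast; ring
  have e2 : (C.V N M (k + 2) : ℝ) + C.E (k + 1) * C.T (k + 1) * C.V N M (k + 1)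
      + -C.dp (k + 1) = C.Y N M (k + 1) := by
    unfold Y; ring
  rw [e1, e2, abs_neg, abs_mul, C.abs_E, one_mul] at key
  have e3 : |C.X N M k * C.Y N M k| = C.T k * (|C.X N M k| * |C.Y N M (k + 1)|) := by
    rw [← C.Y_succ N M k, abs_mul, abs_mul, abs_of_pos hT0]; ring
  rw [e3]
  have e4 : C.T k * (c * (C.a k + C.E (k + 1) * C.T (k + 1) + C.E k * C.xs k)) =
      c * (1 + C.E k * C.T k * C.xs k) := by
    linear_combination c * C.hT k
  have := mul_le_mul_of_nonneg_left key hT0.le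
  linarith

end CF


lemma CF.fut_all {C : CF} (K : ℕ) (R : ℤ) (hR : ∀ k ≥ K, R ≤ C.a k) (F : ℝ → ℝ → Prop)
    (Fs : ∀ (y e y' : ℝ) (a E' : ℤ), 0 < y → y < 1 / 2 → 0 < y' → y' < 1 / 2 → y * (a + E' * y') = 1 →
      R ≤ a → Sg E' → (a = 2 → E' = 1) → F y' e → F y (ste a y e))
    (F0 : ∀ y : ℝ, 0 < y → y < 1 / 2 → y * (R - 1 / 2) ≤ 1 → F y (2 / 5 * y))
    (Fc : ∀ y e, (∀ η > 0, ∃ e', |e' - e| ≤ η ∧ F y e') → F y e) :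
    ∀ k ≥ K, F (C.T k) (C.e k) := by
  have step : ∀ n : ℕ, ∀ k ≥ K, ∃ e', |e' - C.e k| ≤ 2 * (1 / 2) ^ n ∧ F (C.T k) e' := by
    intro n
    induction n with
    | zero =>
      intro k hk
      refine ⟨2 / 5 * C.T k, ?_, F0 _ (C.T0 k) (C.T12 k) ?_⟩
      · have := abs_le.1 (C.e_le1 k)
        have := C.T0 k
        have := C.T12 k
        rw [abs_le]; constructor <;> linarith
      · have h1 : (R : ℝ) ≤ C.a k := by exact_mod_cast hR k hk
        have h2 := (abs_le.1 (CF.ET_lt (C := C) (k + 1)).le).1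
        refine le_of_le_of_eq ?_ (C.hT k)
        have := C.T0 k
        gcongr
        linarith
    | succ n ih =>
      intro k hk
      obtain ⟨e', h1, h2⟩ := ih (k + 1) (by omega)
      refine ⟨ste (C.a k) (C.T k) e', ?_, Fs _ _ _ _ _ (C.T0 k) (C.T12 k) (C.T0 _) (C.T12 _)
        (C.hT k) (hR k hk) (C.hE _) (C.haE k) h2⟩
      rw [C.e_step k]
      have e1 : |ste (C.a k) (C.T k) e' - ste (C.a k) (C.T k) (C.e (k + 1))| =
          C.T k * |e' - C.e (k + 1)| := by
        unfold ste
        split_ifs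
        · rw [show C.T k * (1 - e') - C.T k * (1 - C.e (k + 1)) = -(C.T k * (e' - C.e (k + 1))) by ring,
            abs_neg, abs_mul, abs_of_pos (C.T0 k)]
        · rw [← mul_sub, abs_mul, abs_of_pos (C.T0 k)]
      rw [e1, pow_succ]
      have := C.T0 k
      have := C.T12 k
      have := abs_nonneg (e' - C.e (k + 1))
      nlinarith
  intro k hk
  apply Fc
  intro η hη
  have ht : Tendsto (fun n : ℕ => 2 * (1 / 2 : ℝ) ^ n) atTop (nhds 0) := by
    simpa using (tendsto_pow_atTop_nhds_zero_of_lt_one (r := (1 / 2 : ℝ)) (by norm_num)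
        (by norm_num)).const_mul 2
  obtain ⟨n, hn⟩ := (ht.eventually (ge_mem_nhds hη)).exists
  obtain ⟨e', h1, h2⟩ := step n k hk
  exact ⟨e', h1.trans hn, h2⟩

/-- future region -/
def Fut (r τ t y e : ℝ) : Prop := y * r ≤ 1 ∧ 0 ≤ e ∧ e ≤ y ∧ y - e ≤ τ ∧ y + e ≤ t

lemma Fut_closed (r τ t : ℝ) (y e : ℝ) (h : ∀ η > 0, ∃ e', |e' - e| ≤ η ∧ Fut r τ t y e') :
    Fut r τ t y e := by
  refine ⟨?_, ?_, ?_, ?_, ?_⟩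
  · obtain ⟨e', _, h1, _⟩ := h 1 one_pos; exact h1
  all_goals
    refine le_of_forall_pos_le_add fun η hη => ?_
    obtain ⟨e', h0, h1, h2, h3, h4, h5⟩ := h η hη
    have := abs_le.1 h0
    linarith [this.1, this.2]

lemma Fut_step {R : ℤ} {τ t : ℝ} {o m : ℝ} (ht0 : 0 ≤ t) (ht1 : t ≤ 1) (hτ0 : 0 ≤ τ) (hτ1 : τ ≤ 1)
    (h1 : t * τ ≤ t * o - 2) (h2 : τ ^ 2 ≤ m * τ - 1) (h3 : t ≤ τ * (2 * o - 1))
    (h4 : 1 ≤ t * (m - 1)) (ho : 1 ≤ o) (hm : 1 ≤ m)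
    {y e y' : ℝ} {a E' : ℤ} (hy0 : 0 < y) (hy0' : 0 < y') (hy1' : y' < 1 / 2)
    (hy : y * (a + E' * y') = 1) (ha : R ≤ a) (hE' : Sg E')
    (hao : Odd a → o ≤ a) (ham : ¬ Odd a → m ≤ a) (hF : Fut (R - 1 / 2) τ t y' e) :
    Fut (R - 1 / 2) τ t y (ste a y e) := by
  obtain ⟨f0, f1, f2, f3, f4⟩ := hF
  have hEy : -y' ≤ E' * y' := by rcases hE' with h | h <;> rw [h] <;> push_cast <;> linarith
  have haR : (R : ℝ) ≤ a := by exact_mod_cast ha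
  have g0 : y * (R - 1 / 2) ≤ 1 := by rw [← hy]; gcongr; linarith
  unfold ste
  split_ifs with hod
  · have ho' := hao hod
    have hyo : y * (o - y') ≤ 1 := by rw [← hy]; gcongr; linarith
    refine ⟨g0, by apply mul_nonneg <;> linarith, by nlinarith, ?_, ?_⟩
    · have e1 : y * (2 * o - 1) ≤ 2 := by nlinarith
      have e2 : 0 < 2 * o - 1 := by linarith
      have : y * t ≤ 2 * τ := by nlinarith
      nlinarith
    · have e1 : 2 - e ≤ t * (o - y') := by nlinarith
      have e2 : y * (2 - e) ≤ t := by nlinarith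
      linarith
  · have hm' := ham hod
    have hyo : y * (m - y') ≤ 1 := by rw [← hy]; gcongr; linarith
    refine ⟨g0, by apply mul_nonneg <;> linarith, by nlinarith, ?_, ?_⟩
    · have e1 : 1 - e ≤ τ * (m - y') := by nlinarith
      have e2 : y * (1 - e) ≤ τ := by nlinarith
      linarith
    · have e1 : 1 + e ≤ t * (m - y') := by nlinarith
      have e2 : y * (1 + e) ≤ t := by nlinarith
      linarith

lemma nv_common {a A b B lam : ℤ} {ξ ζ δ δ' : ℝ} (hlam : |(lam : ℝ)| ≤ 1)
    (hab : a * b = A + B + lam) (hbA : |b| ≤ |A|) (hbB : |b| ≤ |B|)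
    (hA : 3 ≤ |A|) (hB : 3 ≤ |B|) (hob : Odd b) (hξ : |ξ| ≤ 1) (hζ : |ζ| ≤ 1) :
    (a + ζ + ξ ≤ |A + ξ * b + δ| + |B + ζ * b + δ'| + |δ| + |δ'| + 1 ∧
      3 - |ξ| - |δ| ≤ |A + ξ * b + δ| ∧ 3 - |ζ| - |δ'| ≤ |B + ζ * b + δ'|) ∨
    (3 * (a + ζ + ξ) ≤ |A + ξ * b + δ| + |B + ζ * b + δ'| + |δ| + |δ'| + 1 ∧
      3 * (1 - |ξ|) - |δ| ≤ |A + ξ * b + δ| ∧ 3 * (1 - |ζ|) - |δ'| ≤ |B + ζ * b + δ'|) ∨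
      a + ζ + ξ < 0 := by
  by_cases hS : a + ζ + ξ < 0
  · exact Or.inr (Or.inr hS)
  push Not at hS
  have hbA' : |(b : ℝ)| ≤ |(A : ℝ)| := by exact_mod_cast hbA
  have hbB' : |(b : ℝ)| ≤ |(B : ℝ)| := by exact_mod_cast hbB
  have hA' : 3 ≤ |(A : ℝ)| := by exact_mod_cast hA
  have hB' : 3 ≤ |(B : ℝ)| := by exact_mod_cast hB
  have hab' : (a : ℝ) * b = A + B + lam := by exact_mod_cast hab
  have hsum : |(b : ℝ)| * (a + ζ + ξ) ≤
      |A + ξ * b + δ| + |B + ζ * b + δ'| + |δ| + |δ'| + 1 := by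
    have e1 : (b : ℝ) * (a + ζ + ξ) = (A + ξ * b + δ) + (B + ζ * b + δ') + -δ + -δ' + lam := by
      linear_combination hab'
    have e2 : |(b : ℝ)| * (a + ζ + ξ) = |(b : ℝ) * (a + ζ + ξ)| := by
      rw [abs_mul, abs_of_nonneg hS]
    rw [e2, e1]
    refine (abs_add_le _ _).trans ?_
    refine add_le_add ?_ hlam
    refine (abs_add_le _ _).trans ?_
    rw [abs_neg δ']
    gcongr
    refine (abs_add_le _ _).trans ?_
    rw [abs_neg δ]
    gcongr
    exact abs_add_le _ _
  have tri : ∀ (Z ξ δ : ℝ), |Z| - |ξ| * |(b : ℝ)| - |δ| ≤ |Z + ξ * b + δ| := by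
    intro Z ξ δ
    have e1 : Z = (Z + ξ * b + δ) - ξ * b - δ := by ring
    have e2 : |Z| ≤ |Z + ξ * b + δ| + |ξ * b| + |δ| := by
      conv_lhs => rw [e1]
      refine (abs_sub _ _).trans ?_
      gcongr
      exact abs_sub _ _
    rw [abs_mul] at e2
    linarith
  have t1 := tri A ξ δ
  have t2 := tri B ζ δ'
  have hb : |b| = 1 ∨ 3 ≤ |b| := by
    obtain ⟨t, rfl⟩ := hob
    rcases abs_cases (2 * t + 1) with ⟨h, _⟩ | ⟨h, _⟩ <;> rw [h] <;> omega
  rcases hb with hb | hb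
  · left
    have hb' : |(b : ℝ)| = 1 := by exact_mod_cast hb
    rw [hb'] at t1 t2 hsum hbA' hbB'
    refine ⟨by linarith, by linarith, by linarith⟩
  · right; left
    have hb' : 3 ≤ |(b : ℝ)| := by exact_mod_cast hb
    refine ⟨by nlinarith, by nlinarith, by nlinarith⟩

lemma nv_low {c : ℝ} {a A b B lam : ℤ} {ξ ζ δ δ' : ℝ} (hc0 : 0 ≤ c) (hc : c ≤ 1 / 5)
    (hlam : |(lam : ℝ)| ≤ 1)
    (hab : a * b = A + B + lam) (hbA : |b| ≤ |A|) (hbB : |b| ≤ |B|)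
    (hA : 3 ≤ |A|) (hB : 3 ≤ |B|) (hob : Odd b) (hξ : |ξ| ≤ 635 / 1000) (hζ : |ζ| ≤ 1 / 2)
    (hδ' : |δ'| ≤ 4 / 10) (hδ : |δ| ≤ 45 / 100) (h1 : |ξ| + |δ| ≤ 93 / 100)
    (h2 : 3 * |ξ| + |δ| ≤ 22 / 10) :
    c * (a + ζ + ξ) ≤ |A + ξ * b + δ| * |B + ζ * b + δ'| := by
  rcases nv_common (ξ := ξ) (ζ := ζ) (δ := δ) (δ' := δ') hlam hab hbA hbB hA hB hob (by linarith) (by linarith) with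
    ⟨e1, e2, e3⟩ | ⟨e1, e2, e3⟩ | e1
  · generalize |A + ξ * b + δ| = p at *
    generalize |B + ζ * b + δ'| = q at *
    have p1 : 2 ≤ p := by linarith
    have q1 : 2 ≤ q := by linarith
    by_cases hS : 0 ≤ a + ζ + ξ
    · nlinarith
    · nlinarith
  · generalize |A + ξ * b + δ| = p at *
    generalize |B + ζ * b + δ'| = q at *
    have p1 : 8 / 10 ≤ p := by linarith
    have q1 : 11 / 10 ≤ q := by linarith
    by_cases hS : 0 ≤ a + ζ + ξ
    · nlinarith
    · nlinarith
  · have : c * (a + ζ + ξ) ≤ 0 := mul_nonpos_of_nonneg_of_nonpos hc0 e1.le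
    exact this.trans (by positivity)

lemma nv_high {c R : ℝ} {a A b B lam : ℤ} {ξ ζ δ δ' : ℝ} (hR : 4 ≤ R) (haR : R ≤ a) (hc : c ≤ 1 - 2 / R)
    (hlam : |(lam : ℝ)| ≤ 1)
    (hab : a * b = A + B + lam) (hbA : |b| ≤ |A|) (hbB : |b| ≤ |B|)
    (hA : 3 ≤ |A|) (hB : 3 ≤ |B|) (hob : Odd b) (hξ : |ξ| ≤ 3 / 10) (hζ : |ζ| ≤ 3 / 10)
    (hδ' : |δ'| ≤ 22 / 100) (hδ : |δ| ≤ 26 / 100) :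
    c * (a + ζ + ξ) ≤ |A + ξ * b + δ| * |B + ζ * b + δ'| := by
  have hS1 : R - 6 / 10 ≤ a + ζ + ξ := by linarith [neg_abs_le ξ, neg_abs_le ζ]
  have hcS : c * (a + ζ + ξ) ≤ (a + ζ + ξ) - 17 / 10 := by
    have h1 : c * (a + ζ + ξ) ≤ (1 - 2 / R) * (a + ζ + ξ) := by
      gcongr
      linarith
    have h2 : 17 / 10 ≤ 2 / R * (a + ζ + ξ) := by
      rw [div_mul_eq_mul_div, le_div_iff₀ (by linarith)]; linarith
    linarith
  refine hcS.trans ?_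
  rcases nv_common (ξ := ξ) (ζ := ζ) (δ := δ) (δ' := δ') hlam hab hbA hbB hA hB hob (by linarith) (by linarith) with
    ⟨e1, e2, e3⟩ | ⟨e1, e2, e3⟩ | e1
  · generalize |A + ξ * b + δ| = p at *
    generalize |B + ζ * b + δ'| = q at *
    have p1 : 244 / 100 ≤ p := by linarith
    have q1 : 244 / 100 ≤ q := by linarith
    nlinarith
  · generalize |A + ξ * b + δ| = p at *
    generalize |B + ζ * b + δ'| = q at *
    have p1 : 184 / 100 ≤ p := by linarith
    have q1 : 184 / 100 ≤ q := by linarith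
    nlinarith
  · linarith


section nicf
variable {α : ℝ}

lemma nicfT_props (hirr : Irrational α) (h0 : 0 < α) (h12 : α < 1 / 2) (k : ℕ) : Irrational (nicfT α k) ∧ 0 < nicfT α k ∧ nicfT α k < 1 / 2 := by
  induction k with
  | zero => exact ⟨hirr, h0, h12⟩
  | succ k ih =>
    obtain ⟨i1, i2, i3⟩ := ih
    have j1 : Irrational (nicfT α k)⁻¹ := i1.inv
    have j2 : Irrational (Int.fract (nicfT α k)⁻¹) := by
      unfold Int.fract; exact j1.sub_intCast _
    have j3 : Int.fract (nicfT α k)⁻¹ ≠ 1 / 2 := by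
      intro h
      apply j2
      exact ⟨1 / 2, by rw [h]; push_cast; rfl⟩
    have j4 : Int.fract (nicfT α k)⁻¹ ≠ 0 := by
      intro h
      apply j2
      exact ⟨0, by rw [h]; push_cast; rfl⟩
    have j5 := Int.fract_nonneg (nicfT α k)⁻¹
    have j6 := Int.fract_lt_one (nicfT α k)⁻¹
    simp only [nicfT]
    split_ifs with h
    · exact ⟨j2, lt_of_le_of_ne j5 (Ne.symm j4), lt_of_le_of_ne h j3⟩
    · refine ⟨by simpa using j2.ratCast_sub 1, by linarith, by push Not at h; linarith⟩

lemma nicfE_sg (k : ℕ) : nicfE α (k + 1) = 1 ∨ nicfE α (k + 1) = -1 := by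
  cases k with
  | zero => left; rfl
  | succ k => simp only [nicfE]; split_ifs <;> simp

lemma nicf_rec (hirr : Irrational α) (h0 : 0 < α) (h12 : α < 1 / 2) (k : ℕ) :
    nicfT α k * (nicfA α (k + 1) + nicfE α (k + 1 + 1) * nicfT α (k + 1)) = 1 := by
  obtain ⟨i1, i2, i3⟩ := nicfT_props hirr h0 h12 k
  have hh : (nicfA α (k + 1) : ℝ) + nicfE α (k + 1 + 1) * nicfT α (k + 1) = (nicfT α k)⁻¹ := by
    have j4 : Int.fract (nicfT α k)⁻¹ ≠ 0 := by
      intro h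
      have j2 : Irrational (Int.fract (nicfT α k)⁻¹) := by
        unfold Int.fract; exact i1.inv.sub_intCast _
      apply j2
      exact ⟨0, by rw [h]; push_cast; rfl⟩
    simp only [nicfT, nicfA, nicfE]
    split_ifs with h
    · push_cast; rw [one_mul]; exact Int.floor_add_fract _
    · rw [Int.ceil_eq_add_one_sub_fract j4]; push_cast; ring
  rw [hh]; field_simp

lemma nicfA_ge (hirr : Irrational α) (h0 : 0 < α) (h12 : α < 1 / 2) (k : ℕ) : 2 ≤ nicfA α (k + 1) := by
  obtain ⟨i1, i2, i3⟩ := nicfT_props hirr h0 h12 k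
  have : 2 < (nicfT α k)⁻¹ := by
    rw [lt_inv_comm₀ (by norm_num) i2]; linarith
  simp only [nicfA]
  split_ifs with h
  · rw [Int.le_floor]; push_cast; linarith
  · have : (2 : ℤ) < ⌈(nicfT α k)⁻¹⌉ := by rw [Int.lt_ceil]; push_cast; linarith
    omega

lemma nicfA_two (hirr : Irrational α) (h0 : 0 < α) (h12 : α < 1 / 2) (k : ℕ) (hk : nicfA α (k + 1) = 2) : nicfE α (k + 1 + 1) = 1 := by
  obtain ⟨i1, i2, i3⟩ := nicfT_props hirr h0 h12 k
  have : 2 < (nicfT α k)⁻¹ := by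
    rw [lt_inv_comm₀ (by norm_num) i2]; linarith
  simp only [nicfA] at hk
  simp only [nicfE]
  split_ifs with h
  · rfl
  · rw [if_neg h] at hk
    have : (2 : ℤ) < ⌈(nicfT α k)⁻¹⌉ := by rw [Int.lt_ceil]; push_cast; linarith
    omega

lemma oddIdx_succ (k : ℕ) :
    oddIdx α (k + 1) = oddIdx α k + (if Odd (nicfA α (k + 1)) then 1 else 0) := by
  unfold oddIdx
  have : Finset.Icc 1 (k + 1) = insert (k + 1) (Finset.Icc 1 k) := by
    ext i; simp only [Finset.mem_Icc, Finset.mem_insert]; omega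
  rw [this, Finset.filter_insert]
  split_ifs with h
  · rw [Finset.card_insert_of_notMem]
    simp
  · rfl

lemma nicfD_pos (hirr : Irrational α) (h0 : 0 < α) (h12 : α < 1 / 2) (k : ℕ) : 0 < nicfD α k :=
  Finset.prod_pos fun j _ => (nicfT_props hirr h0 h12 j).2.1

lemma nicfD_succ (k : ℕ) : nicfD α (k + 1) = nicfD α k * nicfT α k := by
  unfold nicfD; rw [Finset.prod_range_succ]

lemma nicfD_add (hirr : Irrational α) (h0 : 0 < α) (h12 : α < 1 / 2) (n k : ℕ) : nicfD α (n + k) ≤ nicfD α n * (1 / 2) ^ k := by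
  induction k with
  | zero => simp
  | succ k ih =>
    rw [← add_assoc, nicfD_succ, pow_succ, ← mul_assoc]
    have := nicfT_props hirr h0 h12 (n + k)
    have := nicfD_pos hirr h0 h12 (n + k)
    have h3 := (nicfT_props hirr h0 h12 (n + k)).2
    exact mul_le_mul ih h3.2.le h3.1.le (by linarith)

lemma lamStar_abs (i : ℕ) : |(lamStar α i : ℝ)| ≤ 1 := by
  unfold lamStar
  split_ifs
  · push_cast; rw [abs_pow]; simp
  · simp

lemma nicf_term (hirr : Irrational α) (h0 : 0 < α) (h12 : α < 1 / 2) (n k : ℕ) :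
    |(lamStar α (n + 1 + k) : ℝ) * nicfD α (n + 1 + k)| ≤ nicfD α n * ((1 / 2) / 2 ^ k) := by
  rw [abs_mul, abs_of_pos (nicfD_pos hirr h0 h12 _)]
  have h1 := lamStar_abs (α := α) (n + 1 + k)
  have h2 := nicfD_add hirr h0 h12 n (1 + k)
  rw [← add_assoc] at h2
  have h3 := nicfD_pos hirr h0 h12 (n + 1 + k)
  have h4 : ((1:ℝ) / 2) ^ (1 + k) = (1 / 2) / 2 ^ k := by
    rw [pow_add, pow_one, one_div_pow]; ring
  rw [h4] at h2
  nlinarith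

lemma geo_hasSum : HasSum (fun k : ℕ => (1 / 2 : ℝ) / 2 ^ k) 1 := by
  simpa using hasSum_geometric_two' (1 : ℝ)

lemma nicf_summ (hirr : Irrational α) (h0 : 0 < α) (h12 : α < 1 / 2) (n : ℕ) :
    Summable (fun k => (lamStar α (n + 1 + k) : ℝ) * nicfD α (n + 1 + k)) := by
  apply Summable.of_norm_bounded (g := fun k : ℕ => nicfD α n * ((1 / 2 : ℝ) / 2 ^ k))
  · exact geo_hasSum.summable.mul_left _
  · exact fun k => nicf_term hirr h0 h12 n k

lemma dplus_abs (hirr : Irrational α) (h0 : 0 < α) (h12 : α < 1 / 2) (n : ℕ) : |dplus α n| ≤ 1 := by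
  have hD := nicfD_pos hirr h0 h12 n
  unfold dplus
  rw [abs_div, abs_of_pos hD, div_le_one hD]
  have := tsum_of_norm_bounded
    (f := fun k => (lamStar α (n + 1 + k) : ℝ) * nicfD α (n + 1 + k))
    (geo_hasSum.mul_left (nicfD α n))
    (fun k => nicf_term hirr h0 h12 n k)
  rwa [mul_one] at this

lemma dplus_rec (hirr : Irrational α) (h0 : 0 < α) (h12 : α < 1 / 2) (n : ℕ) : dplus α n = nicfT α n * (lamStar α (n + 1) + dplus α (n + 1)) := by
  have hD := nicfD_pos hirr h0 h12 n
  have hT := (nicfT_props hirr h0 h12 n).2.1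
  unfold dplus
  rw [(nicf_summ hirr h0 h12 n).tsum_eq_zero_add]
  have : (fun k => (lamStar α (n + 1 + (k + 1)) : ℝ) * nicfD α (n + 1 + (k + 1))) =
      fun k => (lamStar α (n + 1 + 1 + k) : ℝ) * nicfD α (n + 1 + 1 + k) := by
    ext k; rw [show n + 1 + (k + 1) = n + 1 + 1 + k by ring]
  rw [this, add_zero, nicfD_succ n]
  field_simp

noncomputable def nicfCF (hirr : Irrational α) (h0 : 0 < α) (h12 : α < 1 / 2) : CF where
  a k := nicfA α (k + 1)
  E k := nicfE α (k + 1)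
  s k := (-1) ^ oddIdx α k
  lam k := lamStar α (k + 1)
  T := nicfT α
  dp := dplus α
  T0 k := (nicfT_props hirr h0 h12 k).2.1
  T12 k := (nicfT_props hirr h0 h12 k).2.2
  hT := nicf_rec hirr h0 h12
  E0 := rfl
  hE := nicfE_sg
  ha := nicfA_ge hirr h0 h12
  haE := nicfA_two hirr h0 h12
  hs k := neg_one_pow_eq_or ℤ _
  hodd k h := by
    have h1 := oddIdx_succ (α := α) k
    rw [if_pos h] at h1
    unfold lamStar
    rw [if_pos h, h1, pow_succ]; simp
  heven k h := by
    have h1 := oddIdx_succ (α := α) k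
    rw [if_neg h] at h1
    unfold lamStar
    rw [if_neg h, h1]; simp
  hdp := dplus_rec hirr h0 h12
  hdp1 := dplus_abs hirr h0 h12

lemma D_summable (hirr : Irrational α) (h0 : 0 < α) (h12 : α < 1 / 2) : Summable (nicfD α) := by
  apply Summable.of_nonneg_of_le (f := fun k : ℕ => (1 / 2 : ℝ) ^ k)
  · exact fun k => (nicfD_pos hirr h0 h12 k).le
  · intro k
    have := nicfD_add hirr h0 h12 0 k
    simpa [nicfD] using this
  · exact summable_geometric_of_lt_one (by norm_num) (by norm_num)

lemma gamma_eq (hirr : Irrational α) (h0 : 0 < α) (h12 : α < 1 / 2) : 2 * gammaStar α = 1 + α + dplus α 0 := by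
  have hs := nicf_summ hirr h0 h12 0
  have hD := D_summable hirr h0 h12
  set f : ℕ → ℝ := fun k => nicfD α k + nicfE α (k + 1) * nicfD α (k + 1) with hf
  have hfs : Summable f := by
    refine hD.add ?_
    apply Summable.of_norm_bounded ((summable_nat_add_iff 1).2 hD)
    intro k
    rw [norm_mul, Real.norm_eq_abs, Real.norm_eq_abs, abs_of_pos (nicfD_pos hirr h0 h12 _)]
    rcases nicfE_sg (α := α) k with h | h <;> rw [h] <;> simp
  have hfs1 : Summable (fun k => f (k + 1)) := (summable_nat_add_iff 1).2 hfs
  have key : ∀ k, (((nicfA α (k + 1) : ℝ) - 1 + (nicfE α (k + 1) : ℝ) + (lamStar α (k + 1) : ℝ)) / 2) *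
      nicfD α (k + 1) = (1 / 2) * ((f k - f (k + 1)) +
        (lamStar α (0 + 1 + k) : ℝ) * nicfD α (0 + 1 + k)) := by
    intro k
    have h1 := nicf_rec hirr h0 h12 k
    have h2 := nicfD_succ (α := α) k
    have h3 := nicfD_succ (α := α) (k + 1)
    have e1 : 0 + 1 + k = k + 1 := by ring
    rw [e1]
    simp only [hf]
    rw [h3, h2]
    linear_combination (1 / 2) * nicfD α k * h1
  unfold gammaStar
  rw [tsum_congr key, tsum_mul_left, (hfs.sub hfs1).tsum_add hs, hfs.tsum_sub hfs1,
    hfs.tsum_eq_zero_add]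
  unfold dplus
  have : f 0 = 1 + α := by
    simp [hf, nicfD, nicfE, nicfT]
  rw [this]
  simp only [nicfD, Finset.range_zero, Finset.prod_empty, div_one]
  ring

end nicf


lemma nint_le (x : ℝ) (z : ℤ) : nint x ≤ |x - z| := round_le x z

lemma den_unbdd {α : ℝ} (hirr : Irrational α) (B : ℕ) :
    ∃ q : ℚ, |α - q| < 1 / (q.den : ℝ) ^ 2 ∧ B < q.den := by
  by_contra! hc
  have hinf := Real.infinite_rat_abs_sub_lt_one_div_den_sq_of_irrational hirr
  apply hinf
  obtain ⟨L, hL⟩ := exists_nat_gt ((|α| + 1) * B)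
  have hfin : ((fun z : ℤ × ℤ => (z.1 : ℚ) / (z.2 : ℚ)) ''
      ((Set.Icc (-(L : ℤ)) L) ×ˢ (Set.Icc (0 : ℤ) B))).Finite :=
    ((Set.finite_Icc _ _).prod (Set.finite_Icc _ _)).image _
  refine hfin.subset ?_
  intro q hq
  have hq1 : |α - q| < 1 / (q.den : ℝ) ^ 2 := hq
  have hq2 := hc q hq1
  have hd : (1 : ℝ) ≤ q.den := by exact_mod_cast q.den_pos
  have hd2 : (q.den : ℝ) ≤ B := by exact_mod_cast hq2
  refine ⟨(q.num, q.den), ⟨?_, ?_⟩, ?_⟩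
  · have h1 : |α - q| ≤ 1 := by
      refine hq1.le.trans ?_
      rw [div_le_one (by positivity)]
      nlinarith
    have h2 : |(q : ℝ)| ≤ |α| + 1 := by
      have : (q : ℝ) = α - (α - q) := by ring
      rw [this]
      exact (abs_sub _ _).trans (by linarith)
    have h3 : (q.num : ℝ) = q * q.den := by exact_mod_cast (Rat.mul_den_eq_num q).symm
    have h4 : |(q.num : ℝ)| ≤ L := by
      rw [h3, abs_mul, abs_of_pos (show (0:ℝ) < q.den by linarith)]
      have := abs_nonneg (q : ℝ)
      have := abs_nonneg α
      nlinarith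
    have h5 := abs_le.1 h4
    simp only [Set.mem_Icc]
    constructor
    · exact_mod_cast h5.1
    · exact_mod_cast h5.2
  · simp only [Set.mem_Icc]
    constructor
    · positivity
    · exact_mod_cast hq2
  · simp only
    exact_mod_cast Rat.num_div_den q

lemma freq_bdd {α : ℝ} (hirr : Irrational α) (γ : ℝ) :
    ∃ᶠ n : ℤ in cofinite, (|n| : ℝ) * nint (n * α - γ) ≤ 5 := by
  rw [Filter.frequently_cofinite_iff_infinite]
  intro hfin
  obtain ⟨B, hB⟩ := hfin.bddAbove
  obtain ⟨q, hq1, hq2⟩ := den_unbdd hirr B.toNat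
  have hd : (0 : ℝ) < q.den := by exact_mod_cast q.den_pos
  have hcop : IsCoprime q.num (q.den : ℤ) := by
    rw [Int.isCoprime_iff_gcd_eq_one]
    exact q.reduced
  obtain ⟨u, v, huv⟩ := hcop
  set r : ℤ := round ((q.den : ℝ) * γ) with hr
  set n : ℤ := (r * u) % (q.den : ℤ) + q.den with hn
  have hdz : (0 : ℤ) < q.den := by exact_mod_cast q.den_pos
  have m0 := Int.emod_nonneg (r * u) hdz.ne'
  have m1 := Int.emod_lt_of_pos (r * u) hdz
  have hn0 : (q.den : ℤ) ≤ n := by omega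
  have hn1 : n < 2 * q.den := by omega
  obtain ⟨z, hz⟩ : ∃ z : ℤ, n * q.num = r + q.den * z := by
    refine ⟨-r * v - (r * u) / (q.den : ℤ) * q.num + q.num, ?_⟩
    have := Int.emod_add_mul_ediv (r * u) (q.den : ℤ)
    have e1 : n = r * u - q.den * ((r * u) / (q.den : ℤ)) + q.den := by rw [hn]; linarith
    rw [e1]
    linear_combination r * huv
  have hmem : n ∈ {n : ℤ | (|n| : ℝ) * nint (n * α - γ) ≤ 5} := by
    have hn0' : (q.den : ℝ) ≤ n := by exact_mod_cast hn0
    have hn1' : (n : ℝ) < 2 * q.den := by exact_mod_cast hn1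
    have hz' : (n : ℝ) * q.num = r + q.den * z := by exact_mod_cast hz
    have h3 : (q.num : ℝ) = q * q.den := by exact_mod_cast (Rat.mul_den_eq_num q).symm
    have h1 := nint_le (n * α - γ) z
    have e1 : n * α - γ - z = n * (α - q) + (r - q.den * γ) / q.den := by
      rw [h3] at hz'
      field_simp
      linear_combination hz'
    have h4 : |(r : ℝ) - q.den * γ| ≤ 1 / 2 := by
      rw [abs_sub_comm]; exact abs_sub_round _
    have h5 : |n * α - γ - z| * q.den ≤ 5 / 2 := by
      rw [e1]
      have e2 : |n * (α - q) + (r - q.den * γ) / q.den| ≤ n * |α - q| + 1 / 2 / q.den := by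
        refine (abs_add_le _ _).trans ?_
        rw [abs_mul, abs_div, abs_of_pos hd, abs_of_pos (show (0:ℝ) < n by linarith)]
        gcongr
      have e3 : n * |α - q| ≤ 2 * q.den * (1 / (q.den : ℝ) ^ 2) := by
        gcongr
      calc _ ≤ (2 * q.den * (1 / (q.den : ℝ) ^ 2) + 1 / 2 / q.den) * q.den := by
            gcongr; linarith
        _ = 5 / 2 := by field_simp; norm_num
    simp only [Set.mem_setOf_eq]
    rw [abs_of_pos (show (0:ℝ) < n by linarith)]
    have h6 : 0 ≤ nint (n * α - γ) := abs_nonneg _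
    nlinarith
  have := hB hmem
  omega

lemma Mval_le {α : ℝ} (hirr : Irrational α) (γ : ℝ) : Mval α γ ≤ 5 := by
  unfold Mval
  refine Filter.liminf_le_of_frequently_le (freq_bdd hirr γ) ?_
  exact ⟨0, Filter.eventually_map.2 (Filter.Eventually.of_forall fun n => by
    have : 0 ≤ nint (n * α - γ) := abs_nonneg _
    positivity)⟩

lemma le_Mval {α : ℝ} (hirr : Irrational α) (γ c : ℝ)
    (h : ∀ η > 0, ∀ᶠ n : ℤ in cofinite, c - η ≤ (|n| : ℝ) * nint (n * α - γ)) :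
    c ≤ Mval α γ := by
  refine le_of_forall_pos_sub_le fun η hη => ?_
  unfold Mval
  refine Filter.le_liminf_of_le ?_ (h η hη)
  exact Filter.IsCoboundedUnder.of_frequently_le (freq_bdd hirr γ)

section
variable {α : ℝ} (hirr : Irrational α) (h0 : 0 < α) (h12 : α < 1 / 2)

lemma Y_zero (N M : ℤ) : (nicfCF hirr h0 h12).Y N M 0 = N * α - M - dplus α 0 := by
  simp only [CF.Y, CF.V, nicfCF, nicfE, nicfT]
  push_cast
  ring

lemma Mval_bound (c : ℝ) (hc1 : c ≤ 1) (hc0 : 0 ≤ c)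
    (h : ∀ η > 0, ∃ B : ℝ, ∀ N M : ℤ, Odd N → Odd M → |(nicfCF hirr h0 h12).Y N M 0| ≤ 1 →
      B < |(N : ℝ)| → c - η ≤ |N * (nicfCF hirr h0 h12).Y N M 0|) :
    c / 4 ≤ Mval α (gammaStar α) := by
  apply le_Mval hirr
  intro η hη
  obtain ⟨B, hB⟩ := h η hη
  have hev : ∀ᶠ n : ℤ in cofinite, max B (max 2 (1 / η)) + 2 < |(n : ℝ)| := by
    have h1 : Tendsto (fun n : ℤ => |(n : ℝ)|) cofinite atTop := by
      rw [Int.cofinite_eq]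
      have : Tendsto (fun n : ℤ => |n|) (atBot ⊔ atTop) atTop :=
        tendsto_abs_atBot_atTop.sup tendsto_abs_atTop_atTop
      have h2 := tendsto_intCast_atTop_atTop (R := ℝ) |>.comp this
      refine h2.congr fun n => ?_
      simp
    exact h1.eventually_gt_atTop _
  filter_upwards [hev] with n hn
  have hg := gamma_eq hirr h0 h12
  set m := round (n * α - gammaStar α) with hm
  have hY : (nicfCF hirr h0 h12).Y (2 * n - 1) (2 * m + 1) 0 = 2 * (n * α - gammaStar α - m) := by
    rw [Y_zero]; push_cast; linarith
  have hYa : |(nicfCF hirr h0 h12).Y (2 * n - 1) (2 * m + 1) 0| = 2 * nint (n * α - gammaStar α) := by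
    rw [hY, abs_mul]; simp [nint, hm]
  have hY1 : |(nicfCF hirr h0 h12).Y (2 * n - 1) (2 * m + 1) 0| ≤ 1 := by
    rw [hYa]; have := abs_sub_round (n * α - gammaStar α); unfold nint; linarith
  have hB1 := le_max_left B (max 2 (1 / η))
  have hB2 := (le_max_left 2 (1 / η)).trans (le_max_right B (max 2 (1 / η)))
  have hB3 := (le_max_right 2 (1 / η)).trans (le_max_right B (max 2 (1 / η)))
  have hN1 : |((2 * n - 1 : ℤ) : ℝ)| ≤ 2 * |(n : ℝ)| + 1 := by
    push_cast
    refine (abs_sub _ _).trans ?_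
    rw [abs_mul]; simp
  have hN2 : 2 * |(n : ℝ)| - 1 ≤ |((2 * n - 1 : ℤ) : ℝ)| := by
    push_cast
    have := abs_sub_abs_le_abs_sub (2 * (n : ℝ)) 1
    rw [abs_mul] at this; simp at this; linarith
  have key := hB (2 * n - 1) (2 * m + 1) ⟨n - 1, by ring⟩ ⟨m, by ring⟩ hY1 (by linarith)
  rw [abs_mul, hYa] at key
  have h6 : 0 ≤ nint (n * α - gammaStar α) := abs_nonneg _
  generalize nint (n * α - gammaStar α) = u at *
  generalize |((2 * n - 1 : ℤ) : ℝ)| = w at *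
  generalize |(n : ℝ)| = v at *
  have hu : u ≤ 1 / 2 := by linarith
  -- c - η ≤ 2 w u ≤ (4 v + 2) u
  have k1 : c - η ≤ (4 * v + 2) * u := by nlinarith
  have hv : 1 / η < v := by linarith
  by_contra! hcon
  -- v u < c/4 - η
  have k2 : 3 * η < 2 * u := by nlinarith
  have k3 : 1 < v * η := by rwa [div_lt_iff₀ hη] at hv
  nlinarith

lemma gamma_notin (he : ∀ k, |(nicfCF hirr h0 h12).e k| < 1 / 2) :
    ¬∃ p q : ℤ, gammaStar α = (p : ℝ) + (q : ℝ) * α := by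
  rintro ⟨p, q, hpq⟩
  have hg := gamma_eq hirr h0 h12
  set C := nicfCF hirr h0 h12
  have hY : C.Y (2 * q - 1) (1 - 2 * p) 0 = 0 := by
    rw [Y_zero]; push_cast; linarith
  obtain ⟨j, hj⟩ := CF.no_desc (C.V (2 * q - 1) (1 - 2 * p))
  obtain ⟨c, hc, hYj⟩ := CF.Y_prop (C := C) j
  have hYj := hYj (2 * q - 1) (1 - 2 * p)
  rw [hY, abs_zero, mul_zero, abs_eq_zero] at hYj
  have hodd := C.V_odd (2 * q - 1) (1 - 2 * p) ⟨q - 1, by ring⟩ ⟨-p, by ring⟩ j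
  unfold CF.Y at hYj
  have h1 : |(C.V (2 * q - 1) (1 - 2 * p) (j + 1) : ℝ)| ≤
      |(C.E j : ℝ) * C.T j| * |(C.V (2 * q - 1) (1 - 2 * p) j : ℝ)| + |C.dp j| := by
    have : (C.V (2 * q - 1) (1 - 2 * p) (j + 1) : ℝ) =
      - (C.E j * C.T j * C.V (2 * q - 1) (1 - 2 * p) j) + C.dp j := by linarith
    rw [this]
    refine (abs_add_le _ _).trans ?_
    rw [abs_neg, abs_mul]
  have h2 := CF.ET_lt (C := C) j
  have h3 : |C.dp j| < 1 / 2 := by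
    rw [C.dp_eq, abs_mul, abs_neg, C.abs_s, one_mul]; exact he j
  have h4 : (1 : ℝ) ≤ |(C.V (2 * q - 1) (1 - 2 * p) j : ℝ)| := by
    have : C.V (2 * q - 1) (1 - 2 * p) j ≠ 0 := by
      intro h; rw [h] at hodd; simp at hodd
    have := Int.one_le_abs this
    exact_mod_cast this
  have h5 : |(C.V (2 * q - 1) (1 - 2 * p) j : ℝ)| ≤ |(C.V (2 * q - 1) (1 - 2 * p) (j + 1) : ℝ)| := by
    exact_mod_cast hj
  nlinarith

lemma rho_ge (he : ∀ k, |(nicfCF hirr h0 h12).e k| < 1 / 2) :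
    rho α ≥ Mval α (gammaStar α) := by
  unfold rho
  refine le_csSup ⟨5, ?_⟩ ⟨_, gamma_notin hirr h0 h12 he, rfl⟩
  rintro m ⟨γ, -, rfl⟩
  exact Mval_le hirr γ
end


structure HPar (R : ℤ) (X Δ κ K w o m τ t c : ℝ) : Prop where
  R4 : 4 ≤ R
  X0 : 0 < X
  X1 : X ≤ 29 / 100
  hX : 1 ≤ X * (R - X)
  hXR : X * (R - 1 / 2) = 1
  Δ0 : 0 < Δ
  Δ1 : Δ ≤ 1 / 4
  hΔ : Δ * o = 1 + Δ
  w0 : 0 < w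
  hw : w * o = 1
  oR : (R : ℝ) ≤ o
  mR : (R : ℝ) ≤ m
  κ0 : 0 < κ
  hκ : κ * (m + w) = 1 + Δ
  κ1 : κ ≤ 1
  K0 : 0 < K
  hK : K * (o + w) = 2 + Δ
  K1 : K ≤ 1
  h5 : Δ ≤ κ * (o - X)
  h6 : (K + Δ) * κ ≤ (K * o - 2) * (1 + Δ)
  h7 : (Δ + κ) * X ≤ κ * m - 1
  h8 : 1 + Δ ≤ K * (m - X)
  par : ∀ a : ℤ, R ≤ a → (Odd a → o ≤ a) ∧ (¬ Odd a → m ≤ a)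
  c0 : 0 ≤ c
  c1 : c ≤ 1 - 2 / R
  t0 : 0 ≤ t
  t1 : t ≤ 44 / 100
  τ0 : 0 ≤ τ
  τ1 : τ ≤ 1
  F1 : t * τ ≤ t * o - 2
  F2 : τ ^ 2 ≤ m * τ - 1
  F3 : t ≤ τ * (2 * o - 1)
  F4 : 1 ≤ t * (m - 1)
  F5 : 3 / 5 ≤ τ * (R - 1 / 2)
  F6 : 7 / 5 ≤ t * (R - 1 / 2)
  G1a : c * (1 - κ / (1 + Δ) * (t / 2)) ≤ (1 - κ) * (1 - t)
  G1b : c * (1 / (1 + Δ)) * (t / 2) ≤ 1 - t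
  G1c : c * (1 / 2) * (κ / (1 + Δ)) ≤ 1 - κ
  G0a : c * (1 - K / (2 + Δ) * τ) ≤ (1 - K) * (1 - τ)
  G0b : c * (1 / (2 + Δ)) * τ ≤ 1 - τ
  G0c : c * 1 * (K / (2 + Δ)) ≤ 1 - K
  G0p : c ≤ 1 - K
  G1p : c * (1 + X ^ 2) ≤ 1 - κ
  G2p : c * (1 + X ^ 2) ≤ (1 - Δ * X) * (1 - t)
  G2m : c ≤ 1 - Δ * X
  G3p : c * (1 + X ^ 2) ≤ 1 - τ

/-- past region for R ≥ 4 -/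
def PastH (X Δ κ K x D : ℝ) : Prop :=
  0 ≤ x ∧ x ≤ X ∧ -((1 + Δ) * x) ≤ D ∧ D ≤ Δ * x ∧ -Δ ≤ D ∧ x + D ≤ κ ∧ x - D ≤ K

lemma PastH_step {R : ℤ} {X Δ κ K w o m τ t c : ℝ} (h : HPar R X Δ κ K w o m τ t c)
    {x D : ℝ} {E a : ℤ} (hE : Sg E) (ha : R ≤ a) (hQ : PastH X Δ κ K x D) :
    PastH X Δ κ K (stx a E x) (std a E x D) := by
  obtain ⟨q0, q1, q2, q3, q4, q5, q6⟩ := hQ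
  obtain ⟨R4, X0, X1, hX, -, Δ0, Δ1, hΔ, w0, hw, oR, mR, κ0, hκ, κ1, K0, hK, K1, h5, h6, h7, h8, par, -⟩ := h
  have haR : (R : ℝ) ≤ a := by exact_mod_cast ha
  have hR4 : (4 : ℝ) ≤ R := by exact_mod_cast R4
  have hpos : 1 ≤ (a : ℝ) + E * x := by
    rcases hE with h | h <;> rw [h] <;> push_cast <;> linarith
  have hp : stx a E x * (a + E * x) = 1 := by unfold stx; field_simp
  have hp0 : 0 < stx a E x := by unfold stx; positivity
  have hDe : std a E x D = if Odd a then stx a E x * (-1 + E * D) else -(stx a E x * (E * D)) := rfl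
  rw [hDe]
  generalize stx a E x = p at *
  clear hDe
  have hmul : ∀ L B : ℝ, L ≤ B * (a + E * x) → p * L ≤ B := by
    intro L B hL
    calc p * L ≤ p * (B * (a + E * x)) := by gcongr
      _ = B := by linear_combination B * hp
  have hΔX : Δ * X ≤ 29 / 100 * Δ := by
    have := mul_le_mul_of_nonneg_left X1 Δ0.le
    linarith
  have hxX : Δ * x ≤ Δ * X := by gcongr
  have hΔx0 : 0 ≤ Δ * x := by positivity
  have hD1 : D ≤ Δ := by linarith
  have e1 : p ≤ X := by
    have : p * 1 ≤ X := by
      apply hmul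
      refine hX.trans ?_
      gcongr
      rcases hE with h | h <;> rw [h] <;> push_cast <;> linarith
    linarith
  have hcase : ((E : ℝ) = 1) ∨ ((E : ℝ) = -1) := by
    rcases hE with h | h <;> rw [h] <;> simp
  have hED : -Δ ≤ E * D ∧ E * D ≤ Δ := by
    rcases hcase with h | h <;> rw [h] <;> constructor <;> linarith
  have hEx : -X ≤ E * x := by
    rcases hcase with h | h <;> rw [h] <;> linarith
  have hEx' : -(1 / 2) ≤ E * x := by linarith
  -- the key bound for slopes
  have slope : ∀ q : ℝ, 0 ≤ q → q ≤ 1 → - D - q * x ≤ Δ - q * w := by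
    intro q hq0 hq1
    have hw1 : w * (1 + Δ) = Δ := by linear_combination (1 : ℝ) * (-w * hΔ) + Δ * hw
    have hw2 : Δ * (1 + Δ) - q * Δ = (Δ - q * w) * (1 + Δ) := by linear_combination q * hw1
    have : (- D - q * x) * (1 + Δ) ≤ (Δ - q * w) * (1 + Δ) := by
      rw [← hw2]
      have u1 := mul_le_mul_of_nonneg_left q2 hq0
      have u2 := mul_le_mul_of_nonneg_left q4 (show 0 ≤ 1 + Δ - q by linarith)
      linarith
    exact le_of_mul_le_mul_right this (by linarith)
  split_ifs with hodd
  · have hao := (par a ha).1 hodd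
    refine ⟨hp0.le, e1, ?_, ?_, ?_, ?_, ?_⟩
    · have := mul_le_mul_of_nonneg_left hED.1 hp0.le
      linarith
    · have := mul_le_mul_of_nonneg_left hED.2 hp0.le
      linarith
    · have : p * (1 - E * D) ≤ Δ := by
        apply hmul
        have : Δ * (o + E * x) ≤ Δ * (a + E * x) := by gcongr
        rcases hcase with h | h <;> rw [h] at * <;> linarith
      linarith
    · have : p * (E * D) ≤ κ := by
        apply hmul
        have : κ * (o - X) ≤ κ * (a + E * x) := by gcongr; linarith
        linarith
      linarith
    · have : p * (2 - E * D) ≤ K := by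
        apply hmul
        have hh : K * (o + E * x) ≤ K * (a + E * x) := by gcongr
        refine le_trans ?_ hh
        rcases hcase with h | h <;> rw [h] at *
        · have := slope K K0.le K1
          linarith
        · have : (D + K * x) * (1 + Δ) ≤ (K * o - 2) * (1 + Δ) := by
            refine le_trans ?_ h6
            -- (D + Kx)(1+Δ) ≤ (K+Δ)κ
            have u1 := mul_le_mul_of_nonneg_left q5 (show 0 ≤ K + Δ by linarith)
            have u2 := mul_le_mul_of_nonneg_left q3 (show 0 ≤ 1 - K by linarith)
            linarith
          have := le_of_mul_le_mul_right this (by linarith)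
          linarith
      linarith
  · have ham := (par a ha).2 hodd
    refine ⟨hp0.le, e1, ?_, ?_, ?_, ?_, ?_⟩
    · have := mul_le_mul_of_nonneg_left hED.2 hp0.le
      linarith
    · have := mul_le_mul_of_nonneg_left hED.1 hp0.le
      linarith
    · have := mul_le_mul_of_nonneg_left hED.2 hp0.le
      have := mul_le_mul_of_nonneg_right e1 Δ0.le
      linarith
    · have : p * (1 - E * D) ≤ κ := by
        apply hmul
        have hh : κ * (m + E * x) ≤ κ * (a + E * x) := by gcongr
        refine le_trans ?_ hh
        rcases hcase with h | h <;> rw [h] at *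
        · have := slope κ κ0.le κ1
          linarith
        · have u1 := mul_le_mul_of_nonneg_left q1 (show 0 ≤ Δ + κ by linarith)
          linarith
      linarith
    · have : p * (1 + E * D) ≤ K := by
        apply hmul
        have : K * (m - X) ≤ K * (a + E * x) := by gcongr; linarith
        linarith
      linarith

lemma tight {c κ t p q x y x0 y0 μ ν : ℝ} (hc : 0 ≤ c) (hμ : 0 ≤ μ)
    (hp : 0 ≤ p) (hq : 0 ≤ q) (hx : 0 ≤ x) (hxl : x0 - μ * p ≤ x) (hyl : y0 - ν * q ≤ y)
    (hy : 0 ≤ y0 - ν * q) (hν : 0 ≤ ν)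
    (h1 : c * (1 - x0 * y0) ≤ (1 - κ) * (1 - t)) (h2 : c * μ * y0 ≤ 1 - t)
    (h3 : c * ν * x0 ≤ 1 - κ) :
    c * (1 - x * y) ≤ (1 - κ + p) * (1 - t + q) := by
  have e1 : (x0 - μ * p) * (y0 - ν * q) ≤ x * y := by
    calc (x0 - μ * p) * (y0 - ν * q) ≤ x * (y0 - ν * q) := by gcongr
      _ ≤ x * y := by gcongr
  have e2 : c * ((x0 - μ * p) * (y0 - ν * q)) ≤ c * (x * y) := by gcongr
  have e3 : 0 ≤ c * (μ * p * (ν * q)) := by positivity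
  have e4 := mul_le_mul_of_nonneg_left h2 hp
  have e5 := mul_le_mul_of_nonneg_left h3 hq
  nlinarith [mul_nonneg hp hq]

lemma high_vert {R : ℤ} {X Δ κ K w o m τ t c : ℝ} (h : HPar R X Δ κ K w o m τ t c)
    {x D y e : ℝ} {E : ℤ} (hE : Sg E) (hQ : PastH X Δ κ K x D) (hy0 : 0 < y)
    (hF : Fut (R - 1 / 2) τ t y e) : Vert c x D y e E := by
  obtain ⟨q0, q1, q2, q3, q4, q5, q6⟩ := hQ
  obtain ⟨f0, f1, f2, f3, f4⟩ := hF
  have hR4 : (4 : ℝ) ≤ R := by exact_mod_cast h.R4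
  have hX0 := h.X0
  have hX1 := h.X1
  have hΔ0 := h.Δ0
  have hΔ1 := h.Δ1
  have hc0 := h.c0
  have hc1 : c ≤ 1 := h.c1.trans (by have : 0 ≤ 2 / (R : ℝ) := by positivity
                                     linarith)
  have hyX : y ≤ X := by
    exact le_of_mul_le_mul_right (f0.trans h.hXR.ge) (by linarith)
  have hxy0 : 0 ≤ x * y := by positivity
  have hxy : x * y ≤ X ^ 2 := by
    rw [pow_two]; gcongr
  have hcxy : c * (x * y) ≤ c * X ^ 2 := by gcongr
  have hcxy0 : 0 ≤ c * (x * y) := by positivity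
  have hΔx : Δ * x ≤ Δ * X := by gcongr
  have ht1 := h.t1
  have hΔX : Δ * X ≤ 29 / 100 * Δ := by
    have := mul_le_mul_of_nonneg_left hX1 hΔ0.le
    linarith
  have hΔxx : Δ * x ≤ 1 / 4 * x := by gcongr
  have hD : D ≤ x := by linarith
  have hxy1 : x * y ≤ 1 * y := by
    gcongr
    linarith
  rcases hE with h' | h' <;> rw [h'] <;> unfold Vert <;> push_cast
  · refine ⟨?_, ?_, ?_, ?_⟩
    · have := h.G0p
      have hK1 := h.K1
      calc c * (1 + 1 * x * y) ≤ (1 - x + D) * (1 + x * y) := by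
            rw [one_mul]; gcongr; linarith
        _ ≤ _ := mul_le_mul_of_nonneg_left (by linarith) (by linarith)
    · have := h.G1p
      have : (1 - κ) * 1 ≤ (1 - x - D) * (1 + 1 * y - e) := by
        apply mul_le_mul <;> linarith [h.κ1]
      linarith
    · have := h.G2p
      have : (1 - Δ * X) * (1 - t) ≤ (1 + x + D) * (1 - 1 * y - e) := by
        apply mul_le_mul <;> linarith [h.κ1]
      linarith
    · have := h.G3p
      have : 1 * (1 - τ) ≤ (1 + x - D) * (1 - 1 * y + e) := by
        apply mul_le_mul <;> linarith [h.τ1]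
      linarith
  · refine ⟨?_, ?_, ?_, ?_⟩
    · have hk : 0 < 2 + Δ := by linarith
      have := tight (κ := K) (t := τ) (p := K - x + D) (q := τ - y + e) (x := x) (y := y)
        (x0 := K / (2 + Δ)) (y0 := τ) (μ := 1 / (2 + Δ)) (ν := 1) hc0 (by positivity)
        (by linarith) (by linarith) q0 (by
          rw [div_mul_eq_mul_div, ← sub_div, div_le_iff₀ hk]; linarith) (by linarith)
          (by linarith) (by norm_num) h.G0a h.G0b h.G0c
      calc _ = c * (1 - x * y) := by ring
        _ ≤ _ := this
        _ = _ := by ring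
    · have hk : 0 < 1 + Δ := by linarith
      have := tight (κ := κ) (t := t) (p := κ - x - D) (q := t - y - e) (x := x) (y := y)
        (x0 := κ / (1 + Δ)) (y0 := t / 2) (μ := 1 / (1 + Δ)) (ν := 1 / 2) hc0 (by positivity)
        (by linarith) (by linarith) q0 (by
          rw [div_mul_eq_mul_div, ← sub_div, div_le_iff₀ hk]; linarith) (by linarith)
          (by linarith) (by norm_num) h.G1a h.G1b h.G1c
      calc _ = c * (1 - x * y) := by ring
        _ ≤ _ := this
        _ = _ := by ring
    · have := h.G2m
      have : (1 - Δ * X) * 1 ≤ (1 + x + D) * (1 - -1 * y - e) := by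
        apply mul_le_mul <;> linarith [h.κ1]
      linarith
    · have : (1 : ℝ) * 1 ≤ (1 + x - D) * (1 - -1 * y + e) := by
        apply mul_le_mul <;> linarith [h.κ1]
      linarith

theorem high {C : CF} (hPB : C.PB) (K0 : ℕ) {R : ℤ} (hR : ∀ k ≥ K0, R ≤ C.a k)
    {X Δ κ K w o m τ t c : ℝ} (h : HPar R X Δ κ K w o m τ t c) :
    ∀ η > 0, ∃ B : ℝ, ∀ N M : ℤ, Odd N → Odd M → |C.Y N M 0| ≤ 1 → B < |(N : ℝ)| →
      c - η ≤ |N * C.Y N M 0| := by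
  have hR4 : (4 : ℝ) ≤ R := by exact_mod_cast h.R4
  have hc1 : c ≤ 1 := h.c1.trans (by have : 0 ≤ 2 / (R : ℝ) := by positivity
                                     linarith)
  have hX0 := h.X0
  have hX1 := h.X1
  have hΔ0 := h.Δ0
  have hΔ1 := h.Δ1
  have ht1 := h.t1
  refine CF.assembly hPB K0 R hR (fun x D _ => PastH X Δ κ K x D) (Fut (R - 1 / 2) τ t) c h.c0 hc1
    ?_ ?_ ?_ ?_ ?_ ?_
  · intro E _
    refine ⟨le_refl _, h.X0.le, by simp, by simp, by linarith [h.Δ0], ?_, ?_⟩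
    · linarith [h.κ0]
    · linarith [h.K0]
  · intro x D E a E' hQ hE _ ha _
    exact PastH_step h hE ha hQ
  · intro x D E hQ
    exact ⟨hQ.1, by linarith [hQ.2.1]⟩
  · apply CF.fut_all K0 R hR
    · intro y e y' a E' hy0 hy1 hy0' hy1' hy ha hE' _ hF
      exact Fut_step h.t0 (by linarith) h.τ0 h.τ1 h.F1 h.F2 h.F3 h.F4 (by linarith [h.oR])
        (by linarith [h.mR]) hy0 hy0' hy1' hy ha hE' (h.par a ha).1 (h.par a ha).2 hF
    · intro y hy0 hy1 hy
      have hr : (0 : ℝ) < R - 1 / 2 := by linarith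
      refine ⟨hy, by linarith, by linarith, ?_, ?_⟩
      · have := h.F5
        have : (y - 2 / 5 * y) * (R - 1 / 2) ≤ τ * (R - 1 / 2) := by linarith
        exact le_of_mul_le_mul_right this hr
      · have := h.F6
        have : (y + 2 / 5 * y) * (R - 1 / 2) ≤ t * (R - 1 / 2) := by linarith
        exact le_of_mul_le_mul_right this hr
    · exact Fut_closed _ _ _
  · intro x D E y e hE hQ hy0 hy1 hF
    exact high_vert h hE hQ hy0 hF
  · intro x D x' D' E E' y e a A b B lam δ δ' hQ hx hD hF hy0 hy1 hE hE' ha _ hlam hab hA hB _ hob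
      hbA hbB hδ hδ'
    obtain ⟨q0, q1, q2, q3, q4, q5, q6⟩ := hQ
    obtain ⟨f0, f1, f2, f3, f4⟩ := hF
    have hx' := abs_le.1 hx
    have hD' := abs_le.1 hD
    have a1 : |(E : ℝ) * x| ≤ 3 / 10 := by
      have : |(E : ℝ)| = 1 := by rcases hE with h | h <;> simp [h]
      rw [abs_mul, this, one_mul, abs_le]; constructor <;> linarith [hx'.1, hx'.2]
    have a2 : |(E' : ℝ) * y| ≤ 3 / 10 := by
      have : |(E' : ℝ)| = 1 := by rcases hE' with h | h <;> simp [h]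
      rw [abs_mul, this, one_mul, abs_le]; constructor <;> nlinarith
    have a3 : |D| ≤ 26 / 100 := by
      rw [abs_le]; constructor <;> nlinarith [hD'.1, hD'.2]
    have a4 : |e| ≤ 22 / 100 := by rw [abs_of_nonneg f1]; linarith
    have := nv_high (c := c) (ξ := E * x) (ζ := E' * y) (δ := δ) (δ' := δ') hR4
      (show (R : ℝ) ≤ a by exact_mod_cast ha) h.c1 hlam hab hbA hbB hA hB hob a1 a2
      (hδ'.trans a4) (hδ.trans a3)
    exact this


set_option maxHeartbeats 2000000 in
lemma HPar_even {R : ℤ} (u : ℝ) (hu : 0 ≤ u) (hR : (R : ℝ) = 4 + u) (hpar : Even R) :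
    HPar R (2 / (2 * u + 7)) (1 / (4 + u)) ((5 + u) ^ 2 / ((4 + u) * (u ^ 2 + 9 * u + 21)))
      ((2 * u + 9) * (5 + u) / ((4 + u) * (u ^ 2 + 10 * u + 26))) (1 / (5 + u)) (5 + u) (4 + u)
      ((3 + u) / (u ^ 2 + 7 * u + 11))
      (2 * ((u ^ 2 + 7 * u + 11) / ((4 + u) * (u ^ 2 + 8 * u + 13))))
      ((u ^ 3 + 9 * u ^ 2 + 28 * u + 25) / (4 + u) ^ 3) := by
  have R4 : 4 ≤ R := by
    have : (4 : ℝ) ≤ R := by linarith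
    exact_mod_cast this
  have hpp : ∀ a : ℤ, R ≤ a → (Odd a → 5 + u ≤ (a : ℝ)) ∧ (¬ Odd a → 4 + u ≤ (a : ℝ)) := by
    intro a ha
    constructor
    · intro h
      have : R + 1 ≤ a := by
        rcases h with ⟨k, hk⟩
        rcases hpar with ⟨j, hj⟩
        omega
      have : ((R + 1 : ℤ) : ℝ) ≤ a := by exact_mod_cast this
      push_cast at this
      linarith
    · intro h
      rw [Int.not_odd_iff_even] at h
      have : R ≤ a := by
        rcases h with ⟨k, hk⟩
        rcases hpar with ⟨j, hj⟩
        omega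
      have : (R : ℝ) ≤ a := by exact_mod_cast this
      linarith
  constructor
  case R4 => exact R4
  case par => exact hpp
  all_goals try rw [hR]
  all_goals first
    | positivity
    | linarith
    | (field_simp; done)
    | (field_simp; ring; done)
    | (rw [← sub_nonneg]; field_simp; ring_nf; positivity)

set_option maxHeartbeats 2000000 in
lemma HPar_odd {R : ℤ} (u : ℝ) (hu : 0 ≤ u) (hR : (R : ℝ) = 5 + u) (hpar : Odd R) :
    HPar R (2 / (2 * u + 9)) (1 / (4 + u)) ((5 + u) ^ 2 / ((4 + u) * (u ^ 2 + 11 * u + 31)))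
      ((2 * u + 9) * (5 + u) / ((4 + u) * (u ^ 2 + 10 * u + 26))) (1 / (5 + u)) (5 + u) (6 + u)
      ((5 + u) / (u ^ 2 + 11 * u + 29))
      (2 * ((u ^ 2 + 11 * u + 29) / ((5 + u) * (7 + u) * (4 + u))))
      ((u ^ 3 + 12 * u ^ 2 + 48 * u + 59) / (5 + u) ^ 3) := by
  have R4 : 4 ≤ R := by
    have : (4 : ℝ) ≤ R := by linarith
    exact_mod_cast this
  have hpp : ∀ a : ℤ, R ≤ a → (Odd a → 5 + u ≤ (a : ℝ)) ∧ (¬ Odd a → 6 + u ≤ (a : ℝ)) := by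
    intro a ha
    constructor
    · intro h
      have : R ≤ a := by
        rcases h with ⟨k, hk⟩
        rcases hpar with ⟨j, hj⟩
        omega
      have : (R : ℝ) ≤ a := by exact_mod_cast this
      linarith
    · intro h
      rw [Int.not_odd_iff_even] at h
      have : R + 1 ≤ a := by
        rcases h with ⟨k, hk⟩
        rcases hpar with ⟨j, hj⟩
        omega
      have : ((R + 1 : ℤ) : ℝ) ≤ a := by exact_mod_cast this
      push_cast at this
      linarith
  constructor
  case R4 => exact R4
  case par => exact hpp
  all_goals try rw [hR]
  all_goals first
    | positivity
    | linarith
    | (field_simp; done)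
    | (field_simp; ring; done)
    | (rw [← sub_nonneg]; field_simp; ring_nf; positivity)


/-- the number `θ = (√13 - 3)/2` through the facts we need -/
structure Th (θ : ℝ) : Prop where
  sq : θ ^ 2 = 1 - 3 * θ
  lo : 3027 / 10000 ≤ θ
  hi : θ ≤ 3028 / 10000

/-- past region after a partial quotient at least 3 -/
def LP (θ x D : ℝ) : Prop :=
  0 ≤ x ∧ x ≤ 2 / 5 ∧ -(3 * D) ≤ (4 + θ) * x ∧ 3 * D ≤ (1 + θ) * x ∧ -(3 * D) ≤ 1 + θ ∧
    3 * (x + D) ≤ 1 ∧ -(9 * D) ≤ (5 + 2 * θ) * (1 - x) ∧ (8 + θ) * (x - D) ≤ 6 + θ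

/-- past region after a partial quotient 2 -/
def LTw (θ x D : ℝ) : Prop :=
  19 / 50 ≤ x ∧ x ≤ 5 / 8 ∧ -(3 * D) ≤ (1 + θ) * x ∧ 3 * D ≤ (1 + θ) * x ∧
    x + D ≤ 18 / 25 ∧ (13 + 2 * θ) * (x - D) ≤ 11 + 2 * θ

def LS (θ z w : ℝ) : Prop :=
  -(2 / 5) ≤ z ∧ z ≤ 5 / 8 ∧ -(1 + θ) ≤ 3 * w ∧ 3 * w ≤ 1 + θ ∧
  3 * (1 - w) ≤ (1 + θ) * (3 + z) ∧
  9 * (1 - w) + (5 + 2 * θ) ≤ (5 + 2 * θ) * (3 + z) ∧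
  (8 + θ) * (2 - w) ≤ (6 + θ) * (3 + z) ∧
  3 * (1 - w) ≤ 4 + z ∧
  1 - w ≤ 18 / 25 * (2 + z) ∧
  (13 + 2 * θ) * (1 + w) ≤ (11 + 2 * θ) * (2 + z)

lemma LS_plus {θ x D : ℝ} (h : Th θ) (hP : LP θ x D) : LS θ x D := by
  obtain ⟨sq, lo, hi⟩ := h
  obtain ⟨q0, q1, q2, q3, q4, q5, q6, q7⟩ := hP
  have tx : 0 ≤ θ * x := by positivity
  have tx1 : θ * x ≤ 3028 / 10000 * x := by gcongr
  have m : ∀ u : ℝ, 0 ≤ u → u * -(3 * D) ≤ u * ((4 + θ) * x) := fun u hu =>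
    mul_le_mul_of_nonneg_left q2 hu
  have m' : ∀ u : ℝ, 0 ≤ u → u * -(3 * D) ≤ u * (1 + θ) := fun u hu =>
    mul_le_mul_of_nonneg_left q4 hu
  have sqx : θ ^ 2 * x = x - 3 * (θ * x) := by rw [sq]; ring
  refine ⟨by linarith, by linarith, by linarith, by linarith, ?_, ?_, ?_, ?_, ?_, ?_⟩
  · linarith [m θ (by linarith), m' (1 - θ) (by linarith)]
  · linarith [m (1 + θ) (by linarith), m' (2 - θ) (by linarith)]
  · linarith [m ((5 - 2 * θ) / 3) (by linarith), m' (1 + θ) (by linarith)]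
  · linarith [m ((1 - θ) / 3) (by linarith), m' ((2 + θ) / 3) (by linarith)]
  · linarith
  · have : (13 + 2 * θ) * D ≤ (13 + 2 * θ) * (1 / 3) := by
      apply mul_le_mul_of_nonneg_left <;> linarith
    linarith

lemma LS_minus {θ x D : ℝ} (h : Th θ) (hP : LP θ x D) : LS θ (-x) (-D) := by
  obtain ⟨sq, lo, hi⟩ := h
  obtain ⟨q0, q1, q2, q3, q4, q5, q6, q7⟩ := hP
  have tx : 0 ≤ θ * x := by positivity
  have tx1 : θ * x ≤ 3028 / 10000 * x := by gcongr
  have m : ∀ u : ℝ, 0 ≤ u → u * (3 * (x + D)) ≤ u * 1 := fun u hu =>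
    mul_le_mul_of_nonneg_left q5 hu
  have m' : ∀ u : ℝ, 0 ≤ u → u * (3 * D) ≤ u * ((1 + θ) * x) := fun u hu =>
    mul_le_mul_of_nonneg_left q3 hu
  have sqx : θ ^ 2 * x = x - 3 * (θ * x) := by rw [sq]; ring
  refine ⟨by linarith, by linarith, by linarith, by linarith, ?_, ?_, ?_, ?_, ?_, ?_⟩
  · linarith
  · linarith [m (1 + 4 * θ) (by linarith), m' (2 - 4 * θ) (by linarith)]
  · linarith [m (2 + θ) (by linarith), m' ((2 - 2 * θ) / 3) (by linarith)]
  · linarith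
  · linarith
  · have := mul_le_mul_of_nonneg_left q6 (show 0 ≤ (5 + θ) / 9 by linarith)
    linarith

lemma LS_T {θ x D : ℝ} (h : Th θ) (hP : LTw θ x D) : LS θ x D := by
  obtain ⟨sq, lo, hi⟩ := h
  obtain ⟨q0, q1, q2, q3, q4, q5⟩ := hP
  have tx : 0 ≤ θ * x := mul_nonneg (by linarith) (by linarith)
  have tx1 : θ * x ≤ 3028 / 10000 * x := mul_le_mul_of_nonneg_right hi (by linarith)
  have tx2 : 3027 / 10000 * x ≤ θ * x := mul_le_mul_of_nonneg_right lo (by linarith)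
  have d1 : D ≤ 28 / 100 := by linarith
  have d2 : -(28 / 100) ≤ D := by linarith
  have e1 : θ * D ≤ θ * (28 / 100) := mul_le_mul_of_nonneg_left d1 (by linarith)
  have e2 : θ * -(28 / 100) ≤ θ * D := mul_le_mul_of_nonneg_left d2 (by linarith)
  refine ⟨by linarith, by linarith, by linarith, by linarith, ?_, ?_, ?_, ?_, ?_, ?_⟩ <;> linarith

lemma LP_step {θ z w : ℝ} {a E : ℤ} {x D : ℝ} (h : Th θ) (hS : LS θ z w) (hz : (E : ℝ) * x = z)
    (hw : (E : ℝ) * D = w) (ha : 3 ≤ a) : LP θ (stx a E x) (std a E x D) := by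
  obtain ⟨sq, lo, hi⟩ := h
  obtain ⟨z0, z1, w0, w1, s2, s3, s4, s5, -, -⟩ := hS
  have ha' : (3 : ℝ) ≤ a := by exact_mod_cast ha
  have hDe : std a E x D = if Odd a then stx a E x * (-1 + E * D) else -(stx a E x * (E * D)) := rfl
  have hp : stx a E x * (a + z) = 1 := by
    unfold stx; rw [hz]
    have : (a : ℝ) + z ≠ 0 := by linarith
    field_simp
  have hp0 : 0 < stx a E x := by
    unfold stx; rw [hz]
    have : 0 < (a : ℝ) + z := by linarith
    positivity
  rw [hDe, hw]
  generalize stx a E x = p at *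
  clear hDe
  have hmul : ∀ L B : ℝ, L ≤ B * (a + z) → p * L ≤ B := by
    intro L B hL
    calc p * L ≤ p * (B * (a + z)) := by gcongr
      _ = B := by linear_combination B * hp
  have e1 : p ≤ 2 / 5 := by
    have := hmul 1 (2 / 5) (by linarith)
    linarith
  have hw0 := mul_le_mul_of_nonneg_left w0 hp0.le
  have hw1 := mul_le_mul_of_nonneg_left w1 hp0.le
  have hθ : ∀ u : ℝ, 0 ≤ u → u * 3 ≤ u * a := fun u hu => mul_le_mul_of_nonneg_left ha' hu
  split_ifs with hodd
  · refine ⟨hp0.le, e1, by linarith, by linarith, ?_, ?_, ?_, ?_⟩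
    · have := hmul (3 * (1 - w)) (1 + θ) (by linarith [hθ (1 + θ) (by linarith)])
      linarith
    · have := hmul (3 * w) 1 (by linarith)
      linarith
    · have := hmul (9 * (1 - w) + (5 + 2 * θ)) (5 + 2 * θ) (by linarith [hθ (5 + 2 * θ) (by linarith)])
      linarith
    · have := hmul ((8 + θ) * (2 - w)) (6 + θ) (by linarith [hθ (6 + θ) (by linarith)])
      linarith
  · have ha4 : 4 ≤ a := by
      rcases lt_or_eq_of_le ha with h | h
      · omega
      · exact absurd (by rw [← h]; decide) hodd
    have ha4' : (4 : ℝ) ≤ a := by exact_mod_cast ha4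
    have hp3 : p ≤ 5 / 18 := by
      have := hmul 1 (5 / 18) (by linarith)
      linarith
    have hpw : p * w ≤ 13 / 100 := by
      have := mul_le_mul_of_nonneg_left (show w ≤ 44 / 100 by linarith) hp0.le
      linarith
    have hpt : θ * p ≤ 1 := by
      have := mul_le_mul_of_nonneg_right hi hp0.le
      linarith
    refine ⟨hp0.le, e1, by linarith, by linarith, by linarith, ?_, ?_, ?_⟩
    · have := hmul (3 * (1 - w)) 1 (by linarith)
      linarith
    · have := mul_le_mul_of_nonneg_left hp3 (show 0 ≤ 5 + 2 * θ by linarith)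
      linarith
    · have : (8 + θ) * (p + p * w) ≤ (8 + θ) * (1 / 2) :=
        mul_le_mul_of_nonneg_left (by linarith) (by linarith)
      linarith

lemma LTw_step {θ z w : ℝ} {E : ℤ} {x D : ℝ} (h : Th θ) (hS : LS θ z w) (hz : (E : ℝ) * x = z)
    (hw : (E : ℝ) * D = w) : LTw θ (stx 2 E x) (std 2 E x D) := by
  obtain ⟨sq, lo, hi⟩ := h
  obtain ⟨z0, z1, w0, w1, -, -, -, -, t1, t2⟩ := hS
  have hDe : std 2 E x D = -(stx 2 E x * (E * D)) := by
    unfold std; rw [if_neg (by decide)]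
  have hp : stx 2 E x * (2 + z) = 1 := by
    unfold stx; rw [hz]; push_cast
    have : (2 : ℝ) + z ≠ 0 := by linarith
    field_simp
  have hp0 : 0 < stx 2 E x := by
    unfold stx; rw [hz]; push_cast
    have : 0 < (2 : ℝ) + z := by linarith
    positivity
  rw [hDe, hw]
  generalize stx 2 E x = p at *
  clear hDe
  have hmul : ∀ L B : ℝ, L ≤ B * (2 + z) → p * L ≤ B := by
    intro L B hL
    calc p * L ≤ p * (B * (2 + z)) := by gcongr
      _ = B := by linear_combination B * hp
  have hw0 := mul_le_mul_of_nonneg_left w0 hp0.le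
  have hw1 := mul_le_mul_of_nonneg_left w1 hp0.le
  refine ⟨?_, ?_, by linarith, by linarith, ?_, ?_⟩
  · have := mul_le_mul_of_nonneg_left z1 hp0.le
    linarith
  · have := hmul 1 (5 / 8) (by linarith)
    linarith
  · have := hmul (1 - w) (18 / 25) t1
    linarith
  · have := hmul _ _ t2
    linarith

/-- combined past region for R = 2 -/
def LQ (θ x D : ℝ) (E : ℤ) : Prop := LP θ x D ∨ (LTw θ x D ∧ E = 1)

lemma LP_zero {θ : ℝ} (h : Th θ) : LP θ 0 0 := by
  have := h.lo
  refine ⟨le_refl _, by norm_num, ?_, ?_, ?_, ?_, ?_, ?_⟩ <;> linarith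

lemma LP_S {θ x D : ℝ} {E : ℤ} (h : Th θ) (hP : LP θ x D) (hE : Sg E) : LS θ (E * x) (E * D) := by
  rcases hE with rfl | rfl
  · simpa using LS_plus h hP
  · simpa using LS_minus h hP

lemma LQ_step {θ x D : ℝ} {E a E' : ℤ} (h : Th θ) (hQ : LQ θ x D E) (hE : Sg E) (ha : 2 ≤ a)
    (hE2 : a = 2 → E' = 1) : LQ θ (stx a E x) (std a E x D) E' := by
  have hS : LS θ (E * x) (E * D) := by
    rcases hQ with hP | ⟨hT, rfl⟩
    · exact LP_S h hP hE
    · simpa using LS_T h hT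
  rcases lt_or_eq_of_le ha with h3 | h3
  · exact Or.inl (LP_step h hS rfl rfl h3)
  · subst h3
    exact Or.inr ⟨LTw_step h hS rfl rfl, hE2 rfl⟩

lemma LP_bd {θ x D : ℝ} (h : Th θ) (hP : LP θ x D) : 0 ≤ x ∧ x ≤ 2 / 5 ∧ |D| ≤ 4343 / 10000 := by
  obtain ⟨q0, q1, q2, q3, q4, q5, q6, q7⟩ := hP
  have := h.hi
  refine ⟨q0, q1, ?_⟩
  rw [abs_le]; constructor <;> linarith

lemma LTw_bd {θ x D : ℝ} (h : Th θ) (hP : LTw θ x D) : 0 ≤ x ∧ x ≤ 5 / 8 ∧ |D| ≤ 28 / 100 := by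
  obtain ⟨q0, q1, q2, q3, q4, q5⟩ := hP
  have tx1 : θ * x ≤ 3028 / 10000 * x := mul_le_mul_of_nonneg_right h.hi (by linarith)
  refine ⟨by linarith, q1, ?_⟩
  rw [abs_le]; constructor <;> linarith

lemma CF.rx_zero (C : CF) (i : ℕ) : C.rx 0 i = C.xs i ∧ C.rd 0 i = C.Dn i := by
  induction i with
  | zero => exact ⟨rfl, rfl⟩
  | succ i ih =>
    simp only [CF.rx, CF.rd, CF.xs, CF.Dn, ih.1, ih.2, Nat.zero_add, and_self]

lemma CF.PB_all {θ : ℝ} (h : Th θ) (C : CF) : C.PB := by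
  intro k
  have := CF.Q_all (C := C) 0 2 (fun k _ => C.ha k) (LQ θ) (fun E _ => Or.inl (LP_zero h))
    (fun x D E a E' hQ hE _ ha hE2 => LQ_step h hQ hE ha hE2) k
  rw [(C.rx_zero k).1, (C.rx_zero k).2] at this
  rcases this with hP | ⟨hT, -⟩
  · obtain ⟨b0, b1, b2⟩ := LP_bd h hP
    exact ⟨⟨b0, by linarith⟩, by linarith⟩
  · obtain ⟨b0, b1, b2⟩ := LTw_bd h hT
    exact ⟨⟨b0, by linarith⟩, by linarith⟩

lemma Th_sqrt : Th ((Real.sqrt 13 - 3) / 2) := by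
  have h1 : Real.sqrt 13 ^ 2 = 13 := Real.sq_sqrt (by norm_num)
  have h2 := Real.sqrt_nonneg 13
  refine ⟨by linear_combination (1 / 4) * h1, ?_, ?_⟩
  · have : (36054 / 10000 : ℝ) ≤ Real.sqrt 13 := Real.le_sqrt_of_sq_le (by norm_num)
    linarith
  · have : Real.sqrt 13 ≤ (36056 / 10000 : ℝ) := Real.sqrt_le_iff.2 ⟨by norm_num, by norm_num⟩
    linarith


lemma LP_vert {θ c τ t x D y e : ℝ} {E : ℤ} (h : Th θ) (hP : LP θ x D) (hE : Sg E)
    (c0 : 0 ≤ c) (c1 : c ≤ 1 / 5) (t0 : 0 ≤ t) (t1 : t ≤ 4 / 5) (τ0 : 0 ≤ τ) (τ1 : τ ≤ 1 / 2)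
    (hct : c ≤ 1471 / 2000 * (1 - t))
    (g1 : c * (1 - (1 - θ) / 3 * (t / 2)) ≤ (1 - 1 / 3) * (1 - t))
    (g0 : c * (1 - (5 - θ) / 13 * τ) ≤ (1 - (29 + 2 * θ) / 39) * (1 - τ))
    (y0 : 0 < y) (y1 : y < 1 / 2) (e0 : 0 ≤ e) (e1 : e ≤ y) (f1 : y - e ≤ τ) (f2 : y + e ≤ t) :
    Vert c x D y e E := by
  obtain ⟨sq, lo, hi⟩ := h
  obtain ⟨q0, q1, q2, q3, q4, q5, q6, q7⟩ := hP
  have tx : 0 ≤ θ * x := by positivity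
  have tx1 : θ * x ≤ 3028 / 10000 * x := by gcongr
  have sqx : θ ^ 2 * x = x - 3 * (θ * x) := by rw [sq]; ring
  have hxy0 : 0 ≤ x * y := by positivity
  have hxy2 : x * y ≤ x * (1 / 2) := by gcongr
  have hxy1 : x * y ≤ 1 * y := by
    gcongr
    linarith
  have hcxy0 : 0 ≤ c * (x * y) := by positivity
  have hcxy : c * (x * y) ≤ c * (1 / 4) := by
    gcongr
    linarith
  have hD : D ≤ x := by linarith
  have hK : x - D ≤ (29 + 2 * θ) / 39 := by
    have := mul_le_mul_of_nonneg_left q7 (show 0 ≤ (5 - θ) / 39 by linarith)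
    have e1 : (5 - θ) / 39 * ((8 + θ) * (x - D)) = x - D := by
      linear_combination (-(x - D) / 39) * sq
    have e2 : (5 - θ) / 39 * (6 + θ) = (29 + 2 * θ) / 39 := by
      linear_combination (-1 / 39) * sq
    linarith
  rcases hE with h' | h' <;> rw [h'] <;> unfold Vert <;> push_cast
  · refine ⟨?_, ?_, ?_, ?_⟩
    · calc c * (1 + 1 * x * y) ≤ (1 - x + D) * (1 + x * y) := by
            rw [one_mul]; gcongr; linarith
        _ ≤ _ := mul_le_mul_of_nonneg_left (by linarith) (by linarith)
    · have : (1 - 1 / 3) * 1 ≤ (1 - x - D) * (1 + 1 * y - e) := by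
        apply mul_le_mul <;> linarith
      linarith
    · calc c * (1 + 1 * x * y) ≤ (1471 / 2000 * (1 - t)) * (1 + x * (1 / 2)) := by
            apply mul_le_mul hct <;> linarith
        _ = (1471 / 2000 * (1 + x * (1 / 2))) * (1 - t) := by ring
        _ ≤ _ := by
            apply mul_le_mul <;> linarith
    · have : 1 * (1 / 2) ≤ (1 + x - D) * (1 - 1 * y + e) := by
        apply mul_le_mul <;> linarith
      linarith
  · refine ⟨?_, ?_, ?_, ?_⟩
    · have := tight (κ := (29 + 2 * θ) / 39) (t := τ) (p := (29 + 2 * θ) / 39 - x + D)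
        (q := τ - y + e) (x := x) (y := y)
        (x0 := (5 - θ) / 13) (y0 := τ) (μ := (5 + θ) / 2) (ν := 1) c0 (by linarith)
        (by linarith) (by linarith) q0 (by
          have := mul_le_mul_of_nonneg_left q6 (show 0 ≤ (5 + θ) / 18 by linarith)
          linarith) (by linarith)
          (by linarith) (by norm_num) g0 (by
            have : c * ((5 + θ) / 2) * τ ≤ 1 / 5 * (5 / 2 + 1 / 4) * (1 / 2) := by
              gcongr
              linarith
            linarith) (by
            have : c * 1 * ((5 - θ) / 13) ≤ 1 / 5 * 1 * (5 / 13) := by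
              gcongr
              · linarith
              · linarith
            linarith)
      calc _ = c * (1 - x * y) := by ring
        _ ≤ _ := this
        _ = _ := by ring
    · have := tight (κ := 1 / 3) (t := t) (p := 1 / 3 - x - D) (q := t - y - e) (x := x) (y := y)
        (x0 := (1 - θ) / 3) (y0 := t / 2) (μ := 1 - θ) (ν := 1 / 2) c0 (by linarith)
        (by linarith) (by linarith) q0 (by
          have := mul_le_mul_of_nonneg_left q3 (show 0 ≤ (1 - θ) / 3 by linarith)
          linarith) (by linarith)
          (by linarith) (by norm_num) g1 (by
            have : c * (1 - θ) * (t / 2) ≤ 1471 / 2000 * (1 - t) * 1 * 1 := by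
              gcongr <;> linarith
            linarith) (by
            have : c * (1 / 2) * ((1 - θ) / 3) ≤ 1 / 5 * (1 / 2) * 1 := by
              gcongr
              · linarith
              · linarith
            linarith)
      calc _ = c * (1 - x * y) := by ring
        _ ≤ _ := this
        _ = _ := by ring
    · have : (1 / 2) * 1 ≤ (1 + x + D) * (1 - -1 * y - e) := by
        apply mul_le_mul <;> linarith
      linarith
    · have : (1 : ℝ) * 1 ≤ (1 + x - D) * (1 - -1 * y + e) := by
        apply mul_le_mul <;> linarith
      linarith

lemma LTw_vert {θ c x D y e : ℝ} (h : Th θ) (hP : LTw θ x D)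
    (c0 : 0 ≤ c) (c1 : c ≤ 1471 / 10000) (hc : c * (13 + 2 * θ) = 2)
    (y0 : 0 < y) (y1 : y < 1 / 2) (e0 : 0 ≤ e) (e1 : e ≤ y) (f1 : y - e ≤ 1 / 2)
    (f2 : y + e ≤ 4 / 5) : Vert c x D y e 1 := by
  obtain ⟨sq, lo, hi⟩ := h
  obtain ⟨q0, q1, q2, q3, q4, q5⟩ := hP
  have x0 : 0 ≤ x := by linarith
  have tx1 : θ * x ≤ 3028 / 10000 * x := by gcongr
  have hxy0 : 0 ≤ x * y := by positivity
  have hxy1 : x * y ≤ 1 * y := by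
    gcongr
    linarith
  have hcxy : c * (x * y) ≤ c * (5 / 16) := by
    gcongr
    linarith [mul_le_mul q1 y1.le y0.le (by norm_num : (0 : ℝ) ≤ 5 / 8)]
  have hK : c ≤ 1 - x + D := by
    by_contra! hh
    have := mul_lt_mul_of_pos_right hh (show 0 < 13 + 2 * θ by linarith)
    linarith
  unfold Vert
  push_cast
  refine ⟨?_, ?_, ?_, ?_⟩
  · calc c * (1 + 1 * x * y) ≤ (1 - x + D) * (1 + x * y) := by
          rw [one_mul]; gcongr
      _ ≤ _ := mul_le_mul_of_nonneg_left (by linarith) (by linarith)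
  · have : (7 / 25) * 1 ≤ (1 - x - D) * (1 + 1 * y - e) := by
      apply mul_le_mul <;> linarith
    linarith
  · have : (6 / 5) * (1 / 5) ≤ (1 + x + D) * (1 - 1 * y - e) := by
      apply mul_le_mul <;> linarith
    linarith
  · have : 1 * (1 / 2) ≤ (1 + x - D) * (1 - 1 * y + e) := by
      apply mul_le_mul <;> linarith
    linarith

lemma par34 {a : ℤ} (ha : 3 ≤ a) : (Odd a → (3 : ℝ) ≤ a) ∧ (¬ Odd a → (4 : ℝ) ≤ a) := by
  constructor
  · intro _; exact_mod_cast ha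
  · intro hodd
    have ha4 : 4 ≤ a := by
      rcases lt_or_eq_of_le ha with h | h
      · omega
      · exact absurd (by rw [← h]; decide) hodd
    exact_mod_cast ha4

lemma fut2 (C : CF) : ∀ k ≥ 0, Fut (((2 : ℤ) : ℝ) - 1 / 2) (1 / 2) (4 / 5) (C.T k) (C.e k) := by
  apply CF.fut_all 0 2 (fun k _ => C.ha k)
  · intro y e y' a E' hy0 hy1 hy0' hy1' hy ha hE' hE2 hF
    rcases lt_or_eq_of_le ha with h3 | h3
    · exact Fut_step (o := 3) (m := 4) (by norm_num) (by norm_num) (by norm_num) (by norm_num)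
        (by norm_num) (by norm_num) (by norm_num) (by norm_num) (by norm_num) (by norm_num)
        hy0 hy0' hy1' hy ha hE' (par34 h3).1 (par34 h3).2 hF
    · subst h3
      obtain ⟨f0, f1, f2, f3, f4⟩ := hF
      have e1 : 0 ≤ y * e := by positivity
      have e2 : y * e ≤ y * (2 / 5) := by
        gcongr
        linarith
      unfold ste
      rw [if_neg (by decide)]
      refine ⟨?_, e1, ?_, ?_, ?_⟩
      · push_cast; linarith
      all_goals linarith
  · intro y hy0 hy1 hy
    refine ⟨hy, ?_, ?_, ?_, ?_⟩ <;> linarith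
  · exact Fut_closed _ _ _

lemma e_lt_half (C : CF) (k : ℕ) : |C.e k| < 1 / 2 := by
  obtain ⟨f0, f1, f2, f3, f4⟩ := fut2 C k (Nat.zero_le _)
  rw [abs_of_nonneg f1]
  linarith

lemma nv_L {θ c : ℝ} (h : Th θ) (c0 : 0 ≤ c) (c1 : c ≤ 1 / 5) (R : ℤ) (F : ℝ → ℝ → Prop)
    (Q : ℝ → ℝ → ℤ → Prop) (hQ : ∀ x D E, Q x D E → LP θ x D ∨ LTw θ x D)
    (hF : ∀ y e, F y e → |e| ≤ 4 / 10) : NVok c R Q F := by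
  intro x D x' D' E E' y e a A b B lam δ δ' hQ' hx hD hF' hy0 hy1 hE hE' ha _ hlam hab hA hB _ hob
      hbA hbB hδ hδ'
  have hEa : |(E : ℝ)| = 1 := by rcases hE with h | h <;> simp [h]
  have hEa' : |(E' : ℝ)| = 1 := by rcases hE' with h | h <;> simp [h]
  have ax : |(E : ℝ) * x| = |x| := by rw [abs_mul, hEa, one_mul]
  have ay : |(E' : ℝ) * y| ≤ 1 / 2 := by rw [abs_mul, hEa', one_mul, abs_of_pos hy0]; exact hy1.le
  have tx : |x| ≤ |x'| + 1 / 100 := by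
    have := abs_sub_abs_le_abs_sub x x'
    linarith
  have tD : |D| ≤ |D'| + 1 / 100 := by
    have := abs_sub_abs_le_abs_sub D D'
    linarith
  have he := hF y e hF'
  have hb : |x'| ≤ 5 / 8 ∧ |D'| ≤ 4343 / 10000 ∧ |x'| + |D'| ≤ 91 / 100 ∧ 3 * |x'| + |D'| ≤ 216 / 100 := by
    rcases hQ _ _ _ hQ' with hP | hT
    · obtain ⟨b0, b1, b2⟩ := LP_bd h hP
      rw [abs_of_nonneg b0]
      refine ⟨?_, ?_, ?_, ?_⟩ <;> linarith
    · obtain ⟨b0, b1, b2⟩ := LTw_bd h hT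
      rw [abs_of_nonneg b0]
      refine ⟨?_, ?_, ?_, ?_⟩ <;> linarith
  obtain ⟨b1, b2, b3, b4⟩ := hb
  exact nv_low (ξ := E * x) (ζ := E' * y) c0 c1 hlam hab hbA hbB hA hB hob (by rw [ax]; linarith) ay
    (hδ'.trans he) (by linarith) (by rw [ax]; linarith) (by rw [ax]; linarith)

theorem low2 {θ c : ℝ} (h : Th θ) (hc : c * (13 + 2 * θ) = 2) (C : CF) :
    ∀ η > 0, ∃ B : ℝ, ∀ N M : ℤ, Odd N → Odd M → |C.Y N M 0| ≤ 1 → B < |(N : ℝ)| →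
      c - η ≤ |N * C.Y N M 0| := by
  have hsq := h.sq
  have hlo := h.lo
  have hhi := h.hi
  have hc' : c = (14 - 4 * θ) / 87 := by
    have : c * (13 + 2 * θ) = (14 - 4 * θ) / 87 * (13 + 2 * θ) := by
      rw [hc]; linear_combination (8 / 87) * hsq
    exact mul_right_cancel₀ (by linarith) this
  have c0 : 0 ≤ c := by rw [hc']; linarith
  have c1 : c ≤ 1471 / 10000 := by rw [hc']; linarith
  refine CF.assembly (CF.PB_all h C) 0 2 (fun k _ => C.ha k) (LQ θ)
    (Fut (((2 : ℤ) : ℝ) - 1 / 2) (1 / 2) (4 / 5)) c c0 (by linarith)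
    (fun E _ => Or.inl (LP_zero h)) (fun x D E a E' hQ hE _ ha hE2 => LQ_step h hQ hE ha hE2)
    ?_ (fut2 C) ?_ ?_
  · intro x D E hQ
    rcases hQ with hP | ⟨hT, -⟩
    · obtain ⟨b0, b1, b2⟩ := LP_bd h hP
      exact ⟨b0, by linarith⟩
    · obtain ⟨b0, b1, b2⟩ := LTw_bd h hT
      exact ⟨b0, b1⟩
  · intro x D E y e hE hQ y0 y1 hF
    obtain ⟨f0, f1, f2, f3, f4⟩ := hF
    rcases hQ with hP | ⟨hT, rfl⟩
    · refine LP_vert (τ := 1 / 2) (t := 4 / 5) h hP hE c0 (by linarith) (by norm_num) (by norm_num)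
        (by norm_num) (by norm_num) (by linarith) ?_ ?_ y0 y1 f1 f2 f3 f4
      · rw [hc']; apply le_of_eq; linear_combination (-8 / 1305) * hsq
      · rw [hc']; apply le_of_eq; linear_combination (-2 / 1131) * hsq
    · exact LTw_vert h hT c0 c1 hc y0 y1 f1 f2 f3 f4
  · refine nv_L h c0 (by linarith) 2 _ _ ?_ ?_
    · intro x D E hQ
      rcases hQ with hP | ⟨hT, -⟩
      · exact Or.inl hP
      · exact Or.inr hT
    · intro y e ⟨f0, f1, f2, f3, f4⟩
      rw [abs_of_nonneg f1]; linarith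

theorem low3 {θ s c : ℝ} (h : Th θ) (hs : s ^ 2 = 3) (s0 : 17320 / 10000 ≤ s) (s1 : s ≤ 17321 / 10000)
    (hc : c * (1 - (1 - θ) / 3 * ((s - 1) / 2)) = 2 / 3 * (2 - s)) (C : CF) (K : ℕ)
    (hR : ∀ k ≥ K, 3 ≤ C.a k) :
    0 ≤ c ∧ c ≤ 1 / 5 ∧ ∀ η > 0, ∃ B : ℝ, ∀ N M : ℤ, Odd N → Odd M → |C.Y N M 0| ≤ 1 →
      B < |(N : ℝ)| → c - η ≤ |N * C.Y N M 0| := by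
  have hsq := h.sq
  have hlo := h.lo
  have hhi := h.hi
  have hd1 : 914 / 1000 ≤ 1 - (1 - θ) / 3 * ((s - 1) / 2) := by
    have : (1 - θ) / 3 * ((s - 1) / 2) ≤ (6973 / 10000) / 3 * ((7321 / 10000) / 2) := by
      gcongr <;> linarith
    linarith
  have c0 : 0 ≤ c := by
    by_contra! hh
    have := mul_neg_of_neg_of_pos hh (show 0 < 1 - (1 - θ) / 3 * ((s - 1) / 2) by linarith)
    linarith
  have c1 : c ≤ 1956 / 10000 := by
    have := mul_le_mul_of_nonneg_left hd1 c0
    linarith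
  refine ⟨c0, by linarith, ?_⟩
  have g0 : c * (1 - (5 - θ) / 13 * (2 - s)) = (1 - (29 + 2 * θ) / 39) * (1 - (2 - s)) := by
    have : (1 - (1 - θ) / 3 * ((s - 1) / 2)) * (c * (1 - (5 - θ) / 13 * (2 - s))) =
      (1 - (1 - θ) / 3 * ((s - 1) / 2)) * ((1 - (29 + 2 * θ) / 39) * (1 - (2 - s))) := by
      have e1 : (1 - (1 - θ) / 3 * ((s - 1) / 2)) * (c * (1 - (5 - θ) / 13 * (2 - s))) =
        2 / 3 * (2 - s) * (1 - (5 - θ) / 13 * (2 - s)) := by rw [← hc]; ring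
      rw [e1]
      have h2 : s ^ 2 = 3 := hs
      grind
    exact mul_left_cancel₀ (by linarith) this
  refine CF.assembly (CF.PB_all h C) K 3 hR (fun x D _ => LP θ x D)
    (Fut (((3 : ℤ) : ℝ) - 1 / 2) (2 - s) (s - 1)) c c0 (by linarith)
    (fun E _ => LP_zero h) (fun x D E a E' hQ hE _ ha hE2 => LP_step h (LP_S h hQ hE) rfl rfl ha)
    ?_ ?_ ?_ ?_
  · intro x D E hP
    obtain ⟨b0, b1, b2⟩ := LP_bd h hP
    exact ⟨b0, by linarith⟩
  · apply CF.fut_all K 3 hR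
    · intro y e y' a E' hy0 hy1 hy0' hy1' hy ha hE' hE2 hF
      exact Fut_step (o := 3) (m := 4) (by linarith) (by linarith) (by linarith) (by linarith)
        (by linarith) (by linarith) (by linarith) (by linarith) (by norm_num) (by norm_num)
        hy0 hy0' hy1' hy ha hE' (par34 ha).1 (par34 ha).2 hF
    · intro y hy0 hy1 hy
      have := hy
      push_cast at this
      refine ⟨hy, ?_, ?_, ?_, ?_⟩ <;> linarith
    · exact Fut_closed _ _ _
  · intro x D E y e hE hP y0 y1 hF
    obtain ⟨f0, f1, f2, f3, f4⟩ := hF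
    refine LP_vert (τ := 2 - s) (t := s - 1) h hP hE c0 (by linarith) (by linarith) (by linarith)
        (by linarith) (by linarith) (by linarith) ?_ g0.le y0 y1 f1 f2 f3 f4
    linarith
  · refine nv_L h c0 (by linarith) 3 _ _ ?_ ?_
    · intro x D E hP
      exact Or.inl hP
    · intro y e ⟨f0, f1, f2, f3, f4⟩
      rw [abs_of_nonneg f1]; linarith


/-- Theorem 1: lower bounds for `M(α,γ_*)` (hence for `ρ(α)`) in terms of
`R = liminf a_i`. -/
theorem stmt0 (α : ℝ) (hirr : Irrational α) (h0 : 0 < α) (h12 : α < 1 / 2)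
    (R : ℕ) (hR2 : 2 ≤ R)
    (hbd : ∀ᶠ i in Filter.atTop, (R : ℤ) ≤ nicfA α i)
    (hfreq : ∃ᶠ i in Filter.atTop, nicfA α i = (R : ℤ)) :
    rho α ≥ Mval α (gammaStar α) ∧
      (R = 2 → Mval α (gammaStar α) ≥ 1 / (2 * (Real.sqrt 13 + 10))) ∧
      (R = 3 → Mval α (gammaStar α) ≥
        1 / 4 * (1 - 2 / (1 + Real.sqrt 3)) *
          (1 - 1 / 4 * (1 + ((Real.sqrt 13 - 3) / 2) ^ 2 / (1 - (Real.sqrt 13 - 3) / 2))) /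
          (1 + 1 / 4 * ((Real.sqrt 13 - 3) / 2 - 1 / (1 + Real.sqrt 3)))) ∧
      (4 ≤ R → Even R →
        Mval α (gammaStar α) ≥ 1 / 4 * (1 - 3 / (R : ℝ) + 4 / (R : ℝ) ^ 2 - 7 / (R : ℝ) ^ 3)) ∧
      (5 ≤ R → Odd R →
        Mval α (gammaStar α) ≥ 1 / 4 * (1 - 3 / (R : ℝ) + 3 / (R : ℝ) ^ 2 - 6 / (R : ℝ) ^ 3)) := by
  obtain ⟨K, hK⟩ := Filter.eventually_atTop.1 hbd
  have hKa : ∀ k ≥ K, (R : ℤ) ≤ (nicfCF hirr h0 h12).a k := fun k hk => hK (k + 1) (by omega)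
  have hPB := CF.PB_all Th_sqrt (nicfCF hirr h0 h12)
  refine ⟨rho_ge hirr h0 h12 (fun k => e_lt_half _ k), ?_, ?_, ?_, ?_⟩
  · intro _
    have hpos : 0 < Real.sqrt 13 + 10 := by positivity
    have := Mval_bound hirr h0 h12 (2 / (Real.sqrt 13 + 10))
      (by rw [div_le_one hpos]; linarith [Real.sqrt_nonneg 13]) (by positivity)
      (low2 Th_sqrt (by field_simp; ring) _)
    refine ge_iff_le.2 (le_trans (le_of_eq ?_) this)
    field_simp
    norm_num
  · rintro rfl
    have hT := Th_sqrt
    have hs : Real.sqrt 3 ^ 2 = 3 := Real.sq_sqrt (by norm_num)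
    have hs0 : (17320 / 10000 : ℝ) ≤ Real.sqrt 3 := Real.le_sqrt_of_sq_le (by norm_num)
    have hs1 : Real.sqrt 3 ≤ (17321 / 10000 : ℝ) := Real.sqrt_le_iff.2 ⟨by norm_num, by norm_num⟩
    generalize (Real.sqrt 13 - 3) / 2 = θ at *
    generalize Real.sqrt 3 = s at *
    obtain ⟨hsq, hlo, hhi⟩ := hT
    have e1 : 1 / (1 + s) = (s - 1) / 2 := by
      have : 1 + s ≠ 0 := by linarith
      field_simp
      linear_combination -hs
    have e2 : 2 / (1 + s) = s - 1 := by
      rw [show 2 / (1 + s) = 2 * (1 / (1 + s)) by ring, e1]; ring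
    have e3 : θ ^ 2 / (1 - θ) = (1 - 2 * θ) / 3 := by
      have : 1 - θ ≠ 0 := by linarith
      field_simp
      linear_combination hsq
    have hd : 0 < 1 + 1 / 4 * (θ - (s - 1) / 2) := by linarith
    rw [e1, e2, e3]
    set c := (2 - s) * ((4 + θ) / 6) / (1 + 1 / 4 * (θ - (s - 1) / 2)) with hc
    have hcm : c * (1 + 1 / 4 * (θ - (s - 1) / 2)) = (2 - s) * ((4 + θ) / 6) := by
      rw [hc, div_mul_cancel₀ _ hd.ne']
    have hc' : c * (1 - (1 - θ) / 3 * ((s - 1) / 2)) = 2 / 3 * (2 - s) := by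
      have h1 : (4 + θ) * (1 - θ) = 3 := by linear_combination -hsq
      have : (4 + θ) * (c * (1 - (1 - θ) / 3 * ((s - 1) / 2))) = (4 + θ) * (2 / 3 * (2 - s)) := by
        linear_combination 4 * hcm - c * ((s - 1) / 6) * h1
      exact mul_left_cancel₀ (by linarith) this
    obtain ⟨c0, c1, hh⟩ := low3 ⟨hsq, hlo, hhi⟩ hs hs0 hs1 hc' (nicfCF hirr h0 h12) K hKa
    have := Mval_bound hirr h0 h12 c (by linarith) c0 hh
    refine ge_iff_le.2 (le_trans (le_of_eq ?_) this)
    rw [hc]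
    ring
  · intro h4 hev
    have h4' : (4 : ℝ) ≤ R := by exact_mod_cast h4
    have hp := HPar_even (R := (R : ℤ)) ((R : ℝ) - 4) (by linarith) (by push_cast; ring)
      (by exact_mod_cast hev)
    have hp1 := hp.c1
    have hp2 : 0 ≤ 2 / (((R : ℤ) : ℝ)) := by positivity
    have := Mval_bound hirr h0 h12 _ (by linarith) hp.c0 (high hPB K hKa hp)
    refine ge_iff_le.2 (le_trans (le_of_eq ?_) this)
    rw [show (4 + ((R : ℝ) - 4)) = R by ring]
    field_simp
    ring
  · intro h5 hodd
    have h5' : (5 : ℝ) ≤ R := by exact_mod_cast h5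
    have hp := HPar_odd (R := (R : ℤ)) ((R : ℝ) - 5) (by linarith) (by push_cast; ring)
      (by exact_mod_cast hodd)
    have hp1 := hp.c1
    have hp2 : 0 ≤ 2 / (((R : ℤ) : ℝ)) := by positivity
    have := Mval_bound hirr h0 h12 _ (by linarith) hp.c0 (high hPB K hKa hp)
    refine ge_iff_le.2 (le_trans (le_of_eq ?_) this)
    rw [show (5 + ((R : ℝ) - 5)) = R by ring]
    field_simp
    ring
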